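/- arXiv:1507.07139 — 5 statements merged into one kernel-verified Lean document; each statement's English description precedes it below -/
import Mathlib

section
/- There exist a sequence of real numbers (λ_i)_{i≥0} and continuously differentiable functions (w_i)_{i≥0} on [0,1] such that: λ₀ = 0 and w₀ ≡ 1; 0 < λ₁ < λ₂ ≤ λ₃ ≤ …; each pair (λ_i, w_i) solves the weak Neumann eigenvalue problem for (σ, μ); ∫₀¹ w_i(x) w_k(x) μ(x) dx = 0 whenever i ≠ k; w_i'(0) = w_i'(1) = 0 for every i; after possibly replacing w₁ by −w₁, w₁'(x) > 0 for all x ∈ (0,1), so w₁ is strictly monotone; the derivative w₁' is Hölder continuous of order min(1/2, α); and λ₁ is simple, i.e. every continuously differentiable nonzero solution of the weak Neumann eigenvalue problem with eigenvalue λ₁ is a scalar multiple of w₁. -/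
/-- `u` is continuously differentiable on `[0,1]` with derivative `u'`. -/
def IsC1On01 (u u' : ℝ → ℝ) : Prop :=
  (∀ x ∈ Set.Icc (0:ℝ) 1, HasDerivAt u (u' x) x) ∧ ContinuousOn u' (Set.Icc (0:ℝ) 1)

/-- `(lam, w)` (with derivative `w'`) is a nontrivial solution of the weak Neumann
eigenvalue problem for the pair `(σ, μ)`:
`∫₀¹ w' v' σ² μ = 2 lam ∫₀¹ w v μ` for every `C¹` function `v`. -/
def WeakEigenpair (σ μ : ℝ → ℝ) (lam : ℝ) (w w' : ℝ → ℝ) : Prop :=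
  IsC1On01 w w' ∧ (∃ x ∈ Set.Icc (0:ℝ) 1, w x ≠ 0) ∧
    ∀ v v' : ℝ → ℝ, IsC1On01 v v' →
      ∫ x in (0:ℝ)..1, w' x * v' x * (σ x)^2 * μ x
        = 2 * lam * ∫ x in (0:ℝ)..1, w x * v x * μ x

/-!
Write `a = 2 μ` and `s = (σ² μ)⁻¹`. Testing the weak equation with a primitive of
`w' σ² μ + 2 λ ∫₀ˣ w μ` shows that it is equivalent to the first-order system `w' = s q`,
`q' = -λ a w`, `q 0 = q 1 = 0`, where `q = σ² μ w'` is the flux. Uniqueness for this linear system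
makes every eigenvalue simple, and symmetry of the weak form gives orthogonality.

For `λ = k²` the Prüfer substitution `w = r cos θ`, `q = -k r sin θ` turns the system into
`θ' = k (a cos² θ + s sin² θ)`, and the Neumann conditions become `θ 0 = 0` and `θ 1 ∈ π ℤ`. The
terminal angle depends continuously on `k`, vanishes for `k = 0` and grows at least linearly, so
there are `0 = k₀ < k₁ < ⋯` with terminal angles `n π`. For `n = 1` the angle increases from `0` to
`π`, so `w₁'` has no zero in `(0, 1)`. Finally `w' = s q` with `q` continuously differentiable, so
`w'` is as Hölder continuous as `σ` and `μ` are.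
-/

open Set Filter
open scoped NNReal

section Holder

variable {X : Type*} [PseudoEMetricSpace X] {s : Set X} {r C D : ℝ≥0}

theorem holderOnWith_prodMk {Y Z : Type*} [PseudoEMetricSpace Y] [PseudoEMetricSpace Z]
    {f : X → Y} {g : X → Z} (hf : HolderOnWith C r f s) (hg : HolderOnWith D r g s) :
    HolderOnWith (max C D) r (fun x ↦ (f x, g x)) s := fun x hx y hy ↦
  max_le (hf.mono_const (le_max_left C D) x hx y hy) (hg.mono_const (le_max_right C D) x hx y hy)

theorem exists_holderOnWith_comp_of_contDiffAt {E F : Type*} [NormedAddCommGroup E]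
    [NormedSpace ℝ E] [NormedAddCommGroup F] [NormedSpace ℝ F] {f : X → E} {g : E → F}
    (hs : IsCompact s) (hfc : ContinuousOn f s) (hf : HolderOnWith C r f s)
    (hg : ∀ x ∈ s, ContDiffAt ℝ 1 g (f x)) : ∃ C', HolderOnWith C' r (g ∘ f) s := by
  have hloc : LocallyLipschitzOn (f '' s) g := by
    rintro _ ⟨x, hx, rfl⟩
    obtain ⟨K, t, ht, hK⟩ := (hg x hx).exists_lipschitzOnWith
    exact ⟨K, t, mem_nhdsWithin_of_mem_nhds ht, hK⟩
  obtain ⟨K, hK⟩ := hloc.exists_lipschitzOnWith_of_compact (hs.image_of_continuousOn hfc)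
  have hcomp := (holderOnWith_one.2 hK).comp hf (mapsTo_image f s)
  rw [one_mul] at hcomp
  exact ⟨_, hcomp⟩

theorem exists_holderOnWith_toNNReal_iff {f : ℝ → ℝ} {s : Set ℝ} {β : ℝ} (hβ : 0 ≤ β) :
    (∃ C, HolderOnWith C β.toNNReal f s) ↔
      ∃ C : ℝ, ∀ x ∈ s, ∀ y ∈ s, |f x - f y| ≤ C * |x - y| ^ β := by
  constructor
  · rintro ⟨C, hC⟩
    refine ⟨C, fun x hx y hy ↦ ?_⟩
    simpa only [Real.dist_eq, Real.coe_toNNReal β hβ] using hC.dist_le hx hy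
  · rintro ⟨C, hC⟩
    refine ⟨C.toNNReal, fun x hx y hy ↦ ?_⟩
    rw [edist_dist, edist_dist, ENNReal.ofReal_rpow_of_nonneg dist_nonneg NNReal.zero_le_coe,
      ← ENNReal.ofReal_coe_nnreal, ← ENNReal.ofReal_mul NNReal.zero_le_coe,
      Real.coe_toNNReal β hβ]
    refine ENNReal.ofReal_le_ofReal ((hC x hx y hy).trans ?_)
    gcongr
    exacts [Real.le_coe_toNNReal C, le_rfl]

theorem exists_holderOnWith_of_le {X Y : Type*} [PseudoMetricSpace X] [PseudoEMetricSpace Y]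
    {f : X → Y} {s : Set X} {r r' : ℝ≥0} (hs : Bornology.IsBounded s) (hr : r' ≤ r)
    (hf : ∃ C, HolderOnWith C r f s) : ∃ C, HolderOnWith C r' f s := by
  obtain ⟨C, hC⟩ := hf
  obtain ⟨D, hD⟩ := Metric.isBounded_iff_nndist.1 hs
  exact ⟨_, hC.of_le (fun x hx y hy ↦ by exact_mod_cast hD hx hy) hr⟩

theorem exists_lipschitzOnWith_of_hasDerivWithinAt {E : Type*} [NormedAddCommGroup E]
    [NormedSpace ℝ E] {f f' : ℝ → E} {s : Set ℝ} (hs : Convex ℝ s) (hsc : IsCompact s)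
    (hf : ∀ x ∈ s, HasDerivWithinAt f (f' x) s x) (hf' : ContinuousOn f' s) :
    ∃ K, LipschitzOnWith K f s := by
  obtain ⟨K, hK⟩ := hsc.exists_bound_of_continuousOn hf'
  exact ⟨K.toNNReal, hs.lipschitzOnWith_of_nnnorm_hasDerivWithin_le hf fun x hx ↦
    NNReal.le_toNNReal_of_coe_le (hK x hx)⟩

end Holder

section Calculus

variable {E : Type*} [NormedAddCommGroup E] [NormedSpace ℝ E] {a b : ℝ}

theorem exists_hasDerivAt_of_continuousOn_Icc [CompleteSpace E] {f : ℝ → E} (hab : a ≤ b)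
    (hf : ContinuousOn f (Icc a b)) :
    ∃ F : ℝ → E, F a = 0 ∧ ∀ x ∈ Icc a b, HasDerivAt F (f x) x := by
  have hext : Continuous fun x ↦ f (projIcc a b hab x) := hf.domRestrict.Icc_extend'
  refine ⟨fun x ↦ ∫ t in a..x, f (projIcc a b hab t), intervalIntegral.integral_same,
    fun x hx ↦ ?_⟩
  have hderiv := (hext.integral_hasStrictDerivAt a x).hasDerivAt
  rwa [projIcc_of_mem hab hx] at hderiv

theorem exists_hasDerivAt_of_lipschitzWith_of_norm_le [CompleteSpace E] {v : ℝ → E → E}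
    {K : ℝ≥0} {M : ℝ} (hab : a ≤ b) (hcont : ∀ y, ContinuousOn (v · y) (Icc a b))
    (hlip : ∀ t ∈ Icc a b, LipschitzWith K (v t)) (hM : ∀ t ∈ Icc a b, ∀ y, ‖v t y‖ ≤ M)
    (y₀ : E) : ∃ y : ℝ → E, y a = y₀ ∧ ∀ t ∈ Icc a b, HasDerivAt y (v t (y t)) t := by
  let t₀ : Icc (a - 1) (b + 1) := ⟨a, by linarith, by linarith⟩
  have hpicard : IsPicardLindelof (fun t y ↦ v (projIcc a b hab t) y) t₀ y₀
      (M.toNNReal * (b + 1 - a).toNNReal) 0 M.toNNReal K := by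
    refine ⟨fun t _ ↦ (hlip _ (projIcc a b hab t).2).lipschitzOnWith,
      fun y _ ↦ (hcont y).domRestrict.Icc_extend'.continuousOn,
      fun t _ y _ ↦ (hM _ (projIcc a b hab t).2 y).trans (Real.le_coe_toNNReal M), ?_⟩
    have hmax : max (b + 1 - a) (a - (a - 1)) = b + 1 - a := max_eq_left (by linarith)
    simp only [t₀, hmax, NNReal.coe_mul, NNReal.coe_zero, sub_zero,
      Real.coe_toNNReal (b + 1 - a) (by linarith), le_refl]
  obtain ⟨y, hy₀, hy⟩ := hpicard.exists_eq_forall_mem_Icc_hasDerivWithinAt₀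
  refine ⟨y, hy₀, fun t ht ↦ ?_⟩
  have ht' : t ∈ Ioo (a - 1) (b + 1) := ⟨by linarith [ht.1], by linarith [ht.2]⟩
  have hderiv := (hy t (Ioo_subset_Icc_self ht')).hasDerivAt (Icc_mem_nhds ht'.1 ht'.2)
  rwa [projIcc_of_mem hab ht] at hderiv

theorem dist_le_gronwallBound_of_hasDerivAt_smul {v : ℝ → E → E} {K : ℝ≥0} {M k l t : ℝ}
    {y z : ℝ → E} (hlip : ∀ t ∈ Icc a b, LipschitzWith K (v t))
    (hM : ∀ t ∈ Icc a b, ∀ y, ‖v t y‖ ≤ M) (hya : y a = z a)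
    (hy : ∀ t ∈ Icc a b, HasDerivAt y (k • v t (y t)) t)
    (hz : ∀ t ∈ Icc a b, HasDerivAt z (l • v t (z t)) t) (ht : t ∈ Icc a b) :
    dist (y t) (z t) ≤ gronwallBound 0 (‖l‖₊ * K) (|k - l| * M) (t - a) := by
  have hdist : ∀ t ∈ Ico a b, dist (k • v t (y t)) (l • v t (y t)) ≤ |k - l| * M := by
    intro t ht
    rw [dist_eq_norm, ← sub_smul, norm_smul, Real.norm_eq_abs]
    gcongr
    exact hM t (Ico_subset_Icc_self ht) _
  simpa only [add_zero, NNReal.coe_mul] using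
    dist_le_of_approx_trajectories_ODE_of_mem (v := fun t y ↦ l • v t y) (s := fun _ ↦ univ)
      (K := ‖l‖₊ * K) (δ := 0) (εg := 0)
      (fun t ht ↦ ((lipschitzWith_smul l).comp (hlip t (Ico_subset_Icc_self ht))).lipschitzOnWith)
      (HasDerivAt.continuousOn hy)
      (fun t ht ↦ (hy t (Ico_subset_Icc_self ht)).hasDerivWithinAt) hdist (fun _ _ ↦ mem_univ _)
      (HasDerivAt.continuousOn hz)
      (fun t ht ↦ (hz t (Ico_subset_Icc_self ht)).hasDerivWithinAt)
      (fun _ _ ↦ (dist_self _).le) (fun _ _ ↦ mem_univ _) (by rw [hya, dist_self]) t ht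

theorem continuous_apply_of_hasDerivAt_smul {v : ℝ → E → E} {K : ℝ≥0} {M t : ℝ}
    {y : ℝ → ℝ → E} {y₀ : E} (hlip : ∀ t ∈ Icc a b, LipschitzWith K (v t))
    (hM : ∀ t ∈ Icc a b, ∀ y, ‖v t y‖ ≤ M) (hy₀ : ∀ k, y k a = y₀)
    (hy : ∀ k, ∀ t ∈ Icc a b, HasDerivAt (y k) (k • v t (y k t)) t) (ht : t ∈ Icc a b) :
    Continuous fun k ↦ y k t := by
  refine continuous_iff_continuousAt.2 fun l ↦ tendsto_iff_dist_tendsto_zero.2 ?_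
  refine squeeze_zero (fun _ ↦ dist_nonneg) (fun k ↦ dist_le_gronwallBound_of_hasDerivAt_smul
    hlip hM ((hy₀ k).trans (hy₀ l).symm) (hy k) (hy l) ht) ?_
  have hε : Continuous fun k : ℝ ↦ |k - l| * M := by fun_prop
  have hlim := ((gronwallBound_continuous_ε 0 (‖l‖₊ * K) (t - a)).comp hε).tendsto l
  simpa only [Function.comp_def, sub_self, abs_zero, zero_mul, gronwallBound_ε0_δ0] using hlim

theorem exists_strictMono_apply_eq {f : ℝ → ℝ} (hf : Continuous f) (htop : Tendsto f atTop atTop)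
    {y : ℕ → ℝ} (hy : StrictMono y) {x₀ : ℝ} (hx₀ : f x₀ = y 0) :
    ∃ x : ℕ → ℝ, x 0 = x₀ ∧ StrictMono x ∧ ∀ n, f (x n) = y n := by
  have hnext : ∀ n (t : {t // f t = y n}), ∃ t' : {t // f t = y (n + 1)}, t.1 < t'.1 := by
    rintro n ⟨t, ht⟩
    have hlt : f t < y (n + 1) := ht ▸ hy n.lt_succ_self
    obtain ⟨T, hT, htT⟩ :=
      ((htop.eventually_ge_atTop (y (n + 1))).and (eventually_ge_atTop t)).exists
    obtain ⟨t', ht', hft'⟩ := intermediate_value_Icc htT hf.continuousOn ⟨hlt.le, hT⟩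
    exact ⟨⟨t', hft'⟩, ht'.1.lt_of_ne fun h ↦ hlt.ne (h ▸ hft')⟩
  choose next hnext using hnext
  let x : ∀ n, {t // f t = y n} := fun n ↦ Nat.rec ⟨x₀, hx₀⟩ next n
  exact ⟨fun n ↦ (x n).1, rfl, strictMono_nat_of_lt_succ fun n ↦ hnext n (x n), fun n ↦ (x n).2⟩

theorem eqOn_zero_of_integral_mul_self_eq_zero {g : ℝ → ℝ} (hab : a < b)
    (hg : ContinuousOn g (Icc a b)) (hint : ∫ x in a..b, g x * g x = 0) : EqOn g 0 (Icc a b) := by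
  intro x hx
  by_contra hgx
  have hpos := intervalIntegral.integral_pos hab (hg.mul hg) (fun x _ ↦ mul_self_nonneg (g x))
    ⟨x, hx, mul_self_pos.2 hgx⟩
  exact hpos.ne' hint

end Calculus

section Prufer

variable {a s : ℝ → ℝ} {k x : ℝ}

/-- The angular field of the scaled Prüfer substitution `u = r cos θ`, `q = -k r sin θ` for the
first-order system `u' = s q`, `q' = -k² a u`: the angle satisfies `θ' = k (a cos² θ + s sin² θ)`.
With this scaling the field does not depend on `k`. -/
noncomputable def pruferField (a s : ℝ → ℝ) (x θ : ℝ) : ℝ :=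
  a x * Real.cos θ ^ 2 + s x * Real.sin θ ^ 2

theorem min_le_pruferField (a s : ℝ → ℝ) (x θ : ℝ) : min (a x) (s x) ≤ pruferField a s x θ :=
  calc min (a x) (s x)
      = min (a x) (s x) * Real.cos θ ^ 2 + min (a x) (s x) * Real.sin θ ^ 2 := by
        rw [← mul_add, Real.cos_sq_add_sin_sq, mul_one]
    _ ≤ a x * Real.cos θ ^ 2 + s x * Real.sin θ ^ 2 := by
        gcongr
        exacts [min_le_left _ _, min_le_right _ _]

theorem abs_pruferField_le (a s : ℝ → ℝ) (x θ : ℝ) : |pruferField a s x θ| ≤ |a x| + |s x| :=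
  calc |pruferField a s x θ| ≤ |a x * Real.cos θ ^ 2| + |s x * Real.sin θ ^ 2| := abs_add_le _ _
    _ = |a x| * Real.cos θ ^ 2 + |s x| * Real.sin θ ^ 2 := by
        rw [abs_mul, abs_mul, abs_sq, abs_sq]
    _ ≤ |a x| + |s x| := add_le_add
        (mul_le_of_le_one_right (abs_nonneg _) (Real.cos_sq_le_one θ))
        (mul_le_of_le_one_right (abs_nonneg _) (Real.sin_sq_le_one θ))

theorem abs_pruferField_sub_le (a s : ℝ → ℝ) (x θ φ : ℝ) :
    |pruferField a s x θ - pruferField a s x φ| ≤ |s x - a x| * |θ - φ| := by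
  have hfactor : pruferField a s x θ - pruferField a s x φ =
      (s x - a x) * (Real.sin (θ + φ) * Real.sin (θ - φ)) := by
    rw [pruferField, pruferField, Real.sin_add, Real.sin_sub, Real.cos_sq', Real.cos_sq']
    linear_combination (a x - s x) *
      (Real.sin θ ^ 2 * Real.cos_sq' φ - Real.sin φ ^ 2 * Real.cos_sq' θ)
  rw [hfactor, abs_mul, abs_mul]
  gcongr
  exact (mul_le_of_le_one_left (abs_nonneg _) (Real.abs_sin_le_one _)).trans Real.abs_sin_le_abs

theorem exists_lipschitzWith_pruferField (ha : ContinuousOn a (Icc 0 1))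
    (hs : ContinuousOn s (Icc 0 1)) :
    ∃ K, ∀ x ∈ Icc (0 : ℝ) 1, LipschitzWith K (pruferField a s x) := by
  obtain ⟨K, hK⟩ := isCompact_Icc.exists_bound_of_continuousOn (hs.sub ha)
  refine ⟨K.toNNReal, fun x hx ↦ LipschitzWith.of_dist_le_mul fun θ φ ↦ ?_⟩
  refine (abs_pruferField_sub_le a s x θ φ).trans ?_
  rw [Real.dist_eq]
  gcongr
  exact (hK x hx).trans (Real.le_coe_toNNReal K)

theorem exists_norm_pruferField_le (ha : ContinuousOn a (Icc 0 1))
    (hs : ContinuousOn s (Icc 0 1)) :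
    ∃ M, ∀ x ∈ Icc (0 : ℝ) 1, ∀ θ, ‖pruferField a s x θ‖ ≤ M := by
  obtain ⟨M, hM⟩ := isCompact_Icc.exists_bound_of_continuousOn (ha.abs.add hs.abs)
  exact ⟨M, fun x hx θ ↦
    ((abs_pruferField_le a s x θ).trans (le_abs_self _)).trans (hM x hx)⟩

/-- `θ` is the scaled Prüfer angle of frequency `k` on `[0, 1]` for the coefficients `a` and `s`,
started from the Neumann condition `θ 0 = 0`. -/
structure IsPruferAngle (a s : ℝ → ℝ) (k : ℝ) (θ : ℝ → ℝ) : Prop where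
  apply_zero : θ 0 = 0
  hasDerivAt : ∀ x ∈ Icc (0 : ℝ) 1, HasDerivAt θ (k * pruferField a s x (θ x)) x

theorem exists_isPruferAngle (ha : ContinuousOn a (Icc 0 1)) (hs : ContinuousOn s (Icc 0 1))
    (k : ℝ) : ∃ θ, IsPruferAngle a s k θ := by
  obtain ⟨K, hK⟩ := exists_lipschitzWith_pruferField ha hs
  obtain ⟨M, hM⟩ := exists_norm_pruferField_le ha hs
  obtain ⟨θ, hθ₀, hθ⟩ := exists_hasDerivAt_of_lipschitzWith_of_norm_le
    (v := fun x θ ↦ k • pruferField a s x θ) (K := ‖k‖₊ * K) (M := ‖k‖ * M) zero_le_one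
    (fun θ ↦ continuousOn_const.mul ((ha.mul continuousOn_const).add (hs.mul continuousOn_const)))
    (fun x hx ↦ (lipschitzWith_smul k).comp (hK x hx))
    (fun x hx θ ↦ by rw [norm_smul]; gcongr; exact hM x hx θ) 0
  exact ⟨θ, hθ₀, hθ⟩

theorem continuous_pruferAngle_apply (ha : ContinuousOn a (Icc 0 1))
    (hs : ContinuousOn s (Icc 0 1)) {θ : ℝ → ℝ → ℝ} (hθ : ∀ k, IsPruferAngle a s k (θ k))
    (hx : x ∈ Icc (0 : ℝ) 1) : Continuous fun k ↦ θ k x := by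
  obtain ⟨K, hK⟩ := exists_lipschitzWith_pruferField ha hs
  obtain ⟨M, hM⟩ := exists_norm_pruferField_le ha hs
  exact continuous_apply_of_hasDerivAt_smul hK hM (fun k ↦ (hθ k).apply_zero)
    (fun k ↦ (hθ k).hasDerivAt) hx

namespace IsPruferAngle

variable {θ : ℝ → ℝ}

theorem continuousOn (hθ : IsPruferAngle a s k θ) : ContinuousOn θ (Icc 0 1) :=
  HasDerivAt.continuousOn hθ.hasDerivAt

theorem mul_le_apply_one (hθ : IsPruferAngle a s k θ) (hk : 0 ≤ k) {c : ℝ}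
    (hc : ∀ x ∈ Icc (0 : ℝ) 1, c ≤ min (a x) (s x)) : k * c ≤ θ 1 := by
  have hderiv : ∀ x ∈ interior (Icc (0 : ℝ) 1), k * c ≤ deriv θ x := fun x hx ↦ by
    rw [(hθ.hasDerivAt x (interior_subset hx)).deriv]
    gcongr
    exact (hc x (interior_subset hx)).trans (min_le_pruferField a s x _)
  have hmvt := (convex_Icc (0 : ℝ) 1).mul_sub_le_image_sub_of_le_deriv hθ.continuousOn
    (fun x hx ↦ (hθ.hasDerivAt x (interior_subset hx)).differentiableAt.differentiableWithinAt)
    hderiv 0 (left_mem_Icc.2 zero_le_one) 1 (right_mem_Icc.2 zero_le_one) zero_le_one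
  simpa only [sub_zero, mul_one, hθ.apply_zero] using hmvt

theorem strictMonoOn (hθ : IsPruferAngle a s k θ) (hk : 0 < k)
    (ha : ∀ x ∈ Icc (0 : ℝ) 1, 0 < a x) (hs : ∀ x ∈ Icc (0 : ℝ) 1, 0 < s x) :
    StrictMonoOn θ (Icc 0 1) :=
  strictMonoOn_of_hasDerivWithinAt_pos (convex_Icc 0 1) hθ.continuousOn
    (fun x hx ↦ (hθ.hasDerivAt x (interior_subset hx)).hasDerivWithinAt) fun x hx ↦
      mul_pos hk ((lt_min (ha x (interior_subset hx)) (hs x (interior_subset hx))).trans_le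
        (min_le_pruferField a s x _))

theorem apply_one_of_frequency_zero (hθ : IsPruferAngle a s 0 θ) : θ 1 = 0 := by
  have hconst := constant_of_has_deriv_right_zero hθ.continuousOn fun x hx ↦ by
    simpa only [zero_mul] using (hθ.hasDerivAt x (Ico_subset_Icc_self hx)).hasDerivWithinAt
  rw [hconst 1 (right_mem_Icc.2 zero_le_one), hθ.apply_zero]

end IsPruferAngle

theorem exists_strictMono_isPruferAngle (hac : ContinuousOn a (Icc 0 1))
    (hsc : ContinuousOn s (Icc 0 1)) (ha : ∀ x ∈ Icc (0 : ℝ) 1, 0 < a x)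
    (hs : ∀ x ∈ Icc (0 : ℝ) 1, 0 < s x) :
    ∃ (κ : ℕ → ℝ) (θ : ℕ → ℝ → ℝ), κ 0 = 0 ∧ StrictMono κ ∧
      ∀ n, IsPruferAngle a s (κ n) (θ n) ∧ θ n 1 = n * Real.pi := by
  choose θ hθ using exists_isPruferAngle hac hsc
  obtain ⟨c, hc, hcle⟩ := isCompact_Icc.exists_forall_le' (hac.inf hsc)
    fun x hx ↦ lt_min (ha x hx) (hs x hx)
  have hcont := continuous_pruferAngle_apply hac hsc hθ (right_mem_Icc.2 zero_le_one)
  have htop : Tendsto (fun k ↦ θ k 1) atTop atTop :=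
    tendsto_atTop_mono' atTop
      ((eventually_ge_atTop 0).mono fun k hk ↦ (hθ k).mul_le_apply_one hk hcle)
      (tendsto_id.atTop_mul_const hc)
  have hpi : StrictMono fun n : ℕ ↦ (n : ℝ) * Real.pi :=
    Nat.strictMono_cast.mul_const Real.pi_pos
  obtain ⟨κ, hκ₀, hκ, hκπ⟩ := exists_strictMono_apply_eq hcont htop hpi (x₀ := 0) (by
    rw [(hθ 0).apply_one_of_frequency_zero, Nat.cast_zero, zero_mul])
  exact ⟨κ, fun n ↦ θ (κ n), hκ₀, hκ, fun n ↦ ⟨hθ _, hκπ n⟩⟩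

end Prufer

section NeumannSystem

variable {a s u v q p θ : ℝ → ℝ} {lam k : ℝ}

/-- `u` and its flux `q` solve on `[0, 1]` the first-order system `u' = s q`, `q' = -lam a u` with
Neumann conditions `q 0 = q 1 = 0`, that is, `(s⁻¹ u')' = -lam a u`. Passing through the flux avoids
differentiating `s`. -/
structure IsNeumannSolution (a s : ℝ → ℝ) (lam : ℝ) (u q : ℝ → ℝ) : Prop where
  hasDerivAt : ∀ x ∈ Icc (0 : ℝ) 1, HasDerivAt u (s x * q x) x
  hasDerivAt_flux : ∀ x ∈ Icc (0 : ℝ) 1, HasDerivAt q (-(lam * a x * u x)) x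
  flux_zero : q 0 = 0
  flux_one : q 1 = 0

theorem isNeumannSolution_one (a s : ℝ → ℝ) : IsNeumannSolution a s 0 1 0 where
  hasDerivAt x _ := (hasDerivAt_const x (1 : ℝ)).congr_deriv (mul_zero (s x)).symm
  hasDerivAt_flux x _ :=
    (hasDerivAt_const x (0 : ℝ)).congr_deriv (by simp only [zero_mul, neg_zero])
  flux_zero := rfl
  flux_one := rfl

namespace IsNeumannSolution

theorem continuousOn (h : IsNeumannSolution a s lam u q) : ContinuousOn u (Icc 0 1) :=
  HasDerivAt.continuousOn h.hasDerivAt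

theorem continuousOn_flux (h : IsNeumannSolution a s lam u q) : ContinuousOn q (Icc 0 1) :=
  HasDerivAt.continuousOn h.hasDerivAt_flux

theorem const_mul (h : IsNeumannSolution a s lam u q) (c : ℝ) :
    IsNeumannSolution a s lam (fun x ↦ c * u x) (fun x ↦ c * q x) where
  hasDerivAt x hx := ((h.hasDerivAt x hx).const_mul c).congr_deriv (by ring)
  hasDerivAt_flux x hx := ((h.hasDerivAt_flux x hx).const_mul c).congr_deriv (by ring)
  flux_zero := by rw [h.flux_zero, mul_zero]
  flux_one := by rw [h.flux_one, mul_zero]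

theorem sub (hu : IsNeumannSolution a s lam u q) (hv : IsNeumannSolution a s lam v p) :
    IsNeumannSolution a s lam (fun x ↦ u x - v x) (fun x ↦ q x - p x) where
  hasDerivAt x hx :=
    ((hu.hasDerivAt x hx).sub (hv.hasDerivAt x hx)).congr_deriv (by ring)
  hasDerivAt_flux x hx :=
    ((hu.hasDerivAt_flux x hx).sub (hv.hasDerivAt_flux x hx)).congr_deriv (by ring)
  flux_zero := by rw [hu.flux_zero, hv.flux_zero, sub_zero]
  flux_one := by rw [hu.flux_one, hv.flux_one, sub_zero]

theorem eqOn_zero (h : IsNeumannSolution a s lam u q) (ha : ContinuousOn a (Icc 0 1))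
    (hs : ContinuousOn s (Icc 0 1)) (hu₀ : u 0 = 0) : EqOn u 0 (Icc 0 1) := by
  obtain ⟨A, hA⟩ := isCompact_Icc.exists_bound_of_continuousOn (ha.const_mul lam)
  obtain ⟨S, hS⟩ := isCompact_Icc.exists_bound_of_continuousOn hs
  have hderiv : ∀ x ∈ Icc (0 : ℝ) 1,
      HasDerivAt (fun x ↦ (u x, q x)) (s x * q x, -(lam * a x * u x)) x :=
    fun x hx ↦ (h.hasDerivAt x hx).prodMk (h.hasDerivAt_flux x hx)
  have hbound : ∀ x ∈ Ico (0 : ℝ) 1,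
      ‖(s x * q x, -(lam * a x * u x))‖ ≤ max S A * ‖(u x, q x)‖ := by
    intro x hx
    have hK : 0 ≤ max S A :=
      ((norm_nonneg _).trans (hS x (Ico_subset_Icc_self hx))).trans (le_max_left S A)
    rw [norm_prod_le_iff, norm_neg, norm_mul, norm_mul (lam * a x)]
    constructor
    · exact mul_le_mul ((hS x (Ico_subset_Icc_self hx)).trans (le_max_left S A))
        (norm_snd_le (u x, q x)) (norm_nonneg _) hK
    · exact mul_le_mul ((hA x (Ico_subset_Icc_self hx)).trans (le_max_right S A))
        (norm_fst_le (u x, q x)) (norm_nonneg _) hK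
  have hzero := eq_zero_of_abs_deriv_le_mul_abs_self_of_eq_zero_right
    (HasDerivAt.continuousOn hderiv)
    (fun x hx ↦ (hderiv x (Ico_subset_Icc_self hx)).hasDerivWithinAt)
    (Prod.ext hu₀ h.flux_zero) hbound
  exact fun x hx ↦ congrArg Prod.fst (hzero x hx)

theorem eqOn (hu : IsNeumannSolution a s lam u q) (hv : IsNeumannSolution a s lam v p)
    (ha : ContinuousOn a (Icc 0 1)) (hs : ContinuousOn s (Icc 0 1)) (h₀ : u 0 = v 0) :
    EqOn u v (Icc 0 1) := fun _ hx ↦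
  sub_eq_zero.1 ((hu.sub hv).eqOn_zero ha hs (sub_eq_zero.2 h₀) hx)

theorem exists_eqOn_const_mul (hu : IsNeumannSolution a s lam u q)
    (hv : IsNeumannSolution a s lam v p) (ha : ContinuousOn a (Icc 0 1))
    (hs : ContinuousOn s (Icc 0 1)) (hne : ∃ x ∈ Icc (0 : ℝ) 1, u x ≠ 0) :
    ∃ c, EqOn v (fun x ↦ c * u x) (Icc 0 1) := by
  obtain ⟨x, hx, hux⟩ := hne
  have hu₀ : u 0 ≠ 0 := fun hu₀ ↦ hux (hu.eqOn_zero ha hs hu₀ hx)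
  exact ⟨v 0 / u 0, hv.eqOn (hu.const_mul _) ha hs (div_mul_cancel₀ _ hu₀).symm⟩

end IsNeumannSolution

theorem IsPruferAngle.exists_isNeumannSolution (hθ : IsPruferAngle a s k θ)
    (ha : ContinuousOn a (Icc 0 1)) (hs : ContinuousOn s (Icc 0 1)) {n : ℕ}
    (hθ₁ : θ 1 = n * Real.pi) :
    ∃ r : ℝ → ℝ, r 0 = 1 ∧ (∀ x, 0 < r x) ∧ IsNeumannSolution a s (k ^ 2)
      (fun x ↦ r x * Real.cos (θ x)) (fun x ↦ -k * r x * Real.sin (θ x)) := by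
  have hcont : ContinuousOn (fun x ↦ k * (a x - s x) * Real.sin (θ x) * Real.cos (θ x))
      (Icc 0 1) :=
    (((ha.sub hs).const_mul k).mul (Real.continuous_sin.comp_continuousOn hθ.continuousOn)).mul 
      (Real.continuous_cos.comp_continuousOn hθ.continuousOn)
  obtain ⟨R, hR₀, hR⟩ := exists_hasDerivAt_of_continuousOn_Icc zero_le_one hcont
  refine ⟨fun x ↦ Real.exp (R x), by simp only [hR₀, Real.exp_zero], fun x ↦ Real.exp_pos _,
    fun x hx ↦ ?_, fun x hx ↦ ?_, ?_, ?_⟩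
  · refine ((hR x hx).exp.mul (hθ.hasDerivAt x hx).cos).congr_deriv ?_
    rw [pruferField]
    linear_combination (-Real.exp (R x) * k * s x * Real.sin (θ x)) * Real.cos_sq' (θ x)
  · refine (((hR x hx).exp.const_mul (-k)).mul (hθ.hasDerivAt x hx).sin).congr_deriv ?_
    rw [pruferField]
    linear_combination (-Real.exp (R x) * k ^ 2 * a x * Real.cos (θ x)) * Real.cos_sq' (θ x)
  · rw [hθ.apply_zero, Real.sin_zero, mul_zero]
  · rw [hθ₁, Real.sin_nat_mul_pi, mul_zero]

theorem exists_isNeumannSolution_seq (hac : ContinuousOn a (Icc 0 1))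
    (hsc : ContinuousOn s (Icc 0 1)) (ha : ∀ x ∈ Icc (0 : ℝ) 1, 0 < a x)
    (hs : ∀ x ∈ Icc (0 : ℝ) 1, 0 < s x) :
    ∃ (lam : ℕ → ℝ) (u q : ℕ → ℝ → ℝ), lam 0 = 0 ∧ StrictMono lam ∧
      (∀ n, IsNeumannSolution a s (lam n) (u n) (q n)) ∧ (∀ n, u n 0 = (-1) ^ n) ∧
      ∀ x ∈ Ioo (0 : ℝ) 1, 0 < q 1 x := by
  obtain ⟨κ, θ, hκ₀, hκ, hθ⟩ := exists_strictMono_isPruferAngle hac hsc ha hs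
  choose hθ hθ₁ using hθ
  choose r hr₀ hr hsol using fun n ↦ (hθ n).exists_isNeumannSolution hac hsc (hθ₁ n)
  have hκ_nonneg (n : ℕ) : 0 ≤ κ n := hκ₀ ▸ hκ.monotone n.zero_le
  have hκ₁ : 0 < κ 1 := hκ₀ ▸ hκ zero_lt_one
  refine ⟨fun n ↦ κ n ^ 2, _, _, by simp only [hκ₀, zero_pow two_ne_zero],
    fun i j hij ↦ pow_lt_pow_left₀ (hκ hij) (hκ_nonneg i) two_ne_zero,
    fun n ↦ (hsol n).const_mul ((-1) ^ n), fun n ↦ ?_, fun x hx ↦ ?_⟩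
  · rw [hr₀, (hθ n).apply_zero, Real.cos_zero, mul_one, mul_one]
  · have hmono := (hθ 1).strictMonoOn hκ₁ ha hs
    have hpos : 0 < θ 1 x :=
      (hθ 1).apply_zero ▸ hmono (left_mem_Icc.2 zero_le_one) (Ioo_subset_Icc_self hx) hx.1
    have hlt : θ 1 x < Real.pi := by
      simpa only [hθ₁ 1, Nat.cast_one, one_mul] using
        hmono (Ioo_subset_Icc_self hx) (right_mem_Icc.2 zero_le_one) hx.2
    have hflux := mul_pos (mul_pos hκ₁ (hr 1 x)) (Real.sin_pos_of_pos_of_lt_pi hpos hlt)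
    simpa only [pow_one, neg_mul, one_mul, neg_neg] using hflux

end NeumannSystem

section WeakProblem

variable {σ μ : ℝ → ℝ} {lam : ℝ} {u u' : ℝ → ℝ}

namespace IsC1On01

theorem continuousOn (h : IsC1On01 u u') : ContinuousOn u (Icc 0 1) :=
  HasDerivAt.continuousOn h.1

theorem strictMonoOn (h : IsC1On01 u u') (hpos : ∀ x ∈ Ioo (0 : ℝ) 1, 0 < u' x) :
    StrictMonoOn u (Icc 0 1) :=
  strictMonoOn_of_hasDerivWithinAt_pos (convex_Icc 0 1) h.continuousOn
    (fun x hx ↦ (h.1 x (interior_subset hx)).hasDerivWithinAt)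
    fun x hx ↦ hpos x (interior_Icc (a := (0 : ℝ)) ▸ hx)

theorem integral_deriv (h : IsC1On01 u u') : ∫ x in (0 : ℝ)..1, u' x = u 1 - u 0 :=
  intervalIntegral.integral_eq_sub_of_hasDerivAt
    (fun x hx ↦ h.1 x (uIcc_of_le (zero_le_one' ℝ) ▸ hx))
    (h.2.intervalIntegrable_of_Icc zero_le_one)

theorem integral_mul_deriv (hu : IsC1On01 u u') {v v' : ℝ → ℝ} (hv : IsC1On01 v v')
    (hu₀ : u 0 = 0) (hu₁ : u 1 = 0) :
    ∫ x in (0 : ℝ)..1, u x * v' x = -∫ x in (0 : ℝ)..1, u' x * v x := by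
  have hmem {x : ℝ} (hx : x ∈ uIcc 0 1) : x ∈ Icc (0 : ℝ) 1 := uIcc_of_le (zero_le_one' ℝ) ▸ hx
  rw [intervalIntegral.integral_mul_deriv_eq_deriv_mul (fun x hx ↦ hu.1 x (hmem hx))
    (fun x hx ↦ hv.1 x (hmem hx)) (hu.2.intervalIntegrable_of_Icc zero_le_one)
    (hv.2.intervalIntegrable_of_Icc zero_le_one), hu₀, hu₁, zero_mul, zero_mul, sub_zero, zero_sub]

end IsC1On01

theorem continuousOn_inv_sq_mul (hσc : ContinuousOn σ (Icc 0 1)) (hμc : ContinuousOn μ (Icc 0 1))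
    (hσ : ∀ x ∈ Icc (0 : ℝ) 1, σ x ≠ 0) (hμ : ∀ x ∈ Icc (0 : ℝ) 1, μ x ≠ 0) :
    ContinuousOn (fun x ↦ (σ x ^ 2 * μ x)⁻¹) (Icc 0 1) :=
  ((hσc.pow 2).mul hμc).inv₀ fun x hx ↦ mul_ne_zero (pow_ne_zero 2 (hσ x hx)) (hμ x hx)

theorem IsNeumannSolution.weakEigenpair {q : ℝ → ℝ}
    (h : IsNeumannSolution (fun x ↦ 2 * μ x) (fun x ↦ (σ x ^ 2 * μ x)⁻¹) lam u q)
    (hσc : ContinuousOn σ (Icc 0 1)) (hμc : ContinuousOn μ (Icc 0 1))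
    (hσ : ∀ x ∈ Icc (0 : ℝ) 1, σ x ≠ 0) (hμ : ∀ x ∈ Icc (0 : ℝ) 1, μ x ≠ 0)
    (hne : ∃ x ∈ Icc (0 : ℝ) 1, u x ≠ 0) :
    WeakEigenpair σ μ lam u fun x ↦ (σ x ^ 2 * μ x)⁻¹ * q x := by
  refine ⟨⟨h.hasDerivAt, (continuousOn_inv_sq_mul hσc hμc hσ hμ).mul h.continuousOn_flux⟩, hne,
    fun v v' hv ↦ ?_⟩
  have hq : IsC1On01 q fun x ↦ -(lam * (2 * μ x) * u x) :=
    ⟨h.hasDerivAt_flux, (((hμc.const_mul 2).const_mul lam).mul h.continuousOn).neg⟩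
  calc ∫ x in (0 : ℝ)..1, (σ x ^ 2 * μ x)⁻¹ * q x * v' x * σ x ^ 2 * μ x
      = ∫ x in (0 : ℝ)..1, q x * v' x := by
        refine intervalIntegral.integral_congr fun x hx ↦ ?_
        rw [uIcc_of_le zero_le_one] at hx
        have := hσ x hx
        have := hμ x hx
        field_simp
    _ = -∫ x in (0 : ℝ)..1, -(lam * (2 * μ x) * u x) * v x :=
        hq.integral_mul_deriv hv h.flux_zero h.flux_one
    _ = 2 * lam * ∫ x in (0 : ℝ)..1, u x * v x * μ x := by
        rw [← intervalIntegral.integral_neg, ← intervalIntegral.integral_const_mul]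
        congr 1 with x
        ring

namespace WeakEigenpair

theorem integral_mul_eq_zero {κ : ℝ} {v v' : ℝ → ℝ} (hu : WeakEigenpair σ μ lam u u')
    (hv : WeakEigenpair σ μ κ v v') (hne : lam ≠ κ) : ∫ x in (0 : ℝ)..1, u x * v x * μ x = 0 := by
  have huv := hu.2.2 v v' hv.1
  have hvu := hv.2.2 u u' hu.1
  simp only [mul_comm (v' _), mul_comm (v _)] at hvu
  have hdiff : (lam - κ) * ∫ x in (0 : ℝ)..1, u x * v x * μ x = 0 := by
    linear_combination (hvu - huv) / 2
  exact (mul_eq_zero.1 hdiff).resolve_left (sub_ne_zero.2 hne)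

theorem integral_mul_weight_eq_zero (h : WeakEigenpair σ μ lam u u') :
    ∫ x in (0 : ℝ)..1, 2 * lam * (u x * μ x) = 0 := by
  have htest := h.2.2 (fun _ ↦ 1) (fun _ ↦ 0)
    ⟨fun x _ ↦ hasDerivAt_const x 1, continuousOn_const⟩
  simp only [mul_zero, zero_mul, mul_one, intervalIntegral.integral_zero] at htest
  rw [intervalIntegral.integral_const_mul, ← htest]

theorem flux_add_primitive_eq_zero (h : WeakEigenpair σ μ lam u u')
    (hσc : ContinuousOn σ (Icc 0 1)) (hμc : ContinuousOn μ (Icc 0 1)) {F : ℝ → ℝ}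
    (hF : IsC1On01 F fun x ↦ 2 * lam * (u x * μ x)) (hF₀ : F 0 = 0) (hF₁ : F 1 = 0) :
    EqOn (fun x ↦ u' x * (σ x ^ 2 * μ x) + F x) 0 (Icc 0 1) := by
  have hflux : ContinuousOn (fun x ↦ u' x * (σ x ^ 2 * μ x)) (Icc 0 1) :=
    h.1.2.mul ((hσc.pow 2).mul hμc)
  set g : ℝ → ℝ := fun x ↦ u' x * (σ x ^ 2 * μ x) + F x with hg_def
  have hg : ContinuousOn g (Icc 0 1) := hflux.add hF.continuousOn
  obtain ⟨V, -, hV⟩ := exists_hasDerivAt_of_continuousOn_Icc zero_le_one hg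
  have hVg : IsC1On01 V g := ⟨hV, hg⟩
  refine eqOn_zero_of_integral_mul_self_eq_zero zero_lt_one hg ?_
  calc ∫ x in (0 : ℝ)..1, g x * g x
      = ∫ x in (0 : ℝ)..1, (u' x * g x * σ x ^ 2 * μ x + F x * g x) := by
        congr 1 with x
        simp only [hg_def]
        ring
    _ = (∫ x in (0 : ℝ)..1, u' x * g x * σ x ^ 2 * μ x) + ∫ x in (0 : ℝ)..1, F x * g x :=
        intervalIntegral.integral_add
          ((((h.1.2.mul hg).mul (hσc.pow 2)).mul hμc).intervalIntegrable_of_Icc zero_le_one)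
          ((hF.continuousOn.mul hg).intervalIntegrable_of_Icc zero_le_one)
    _ = 2 * lam * (∫ x in (0 : ℝ)..1, u x * V x * μ x)
          - ∫ x in (0 : ℝ)..1, 2 * lam * (u x * μ x) * V x := by
        rw [h.2.2 V g hVg, hF.integral_mul_deriv hVg hF₀ hF₁, sub_eq_add_neg]
    _ = 0 := by
        rw [← intervalIntegral.integral_const_mul, sub_eq_zero]
        congr 1 with x
        ring

theorem exists_isNeumannSolution (h : WeakEigenpair σ μ lam u u')
    (hσc : ContinuousOn σ (Icc 0 1)) (hμc : ContinuousOn μ (Icc 0 1))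
    (hσ : ∀ x ∈ Icc (0 : ℝ) 1, σ x ≠ 0) (hμ : ∀ x ∈ Icc (0 : ℝ) 1, μ x ≠ 0) :
    ∃ q, IsNeumannSolution (fun x ↦ 2 * μ x) (fun x ↦ (σ x ^ 2 * μ x)⁻¹) lam u q := by
  have hcont : ContinuousOn (fun x ↦ 2 * lam * (u x * μ x)) (Icc 0 1) :=
    (h.1.continuousOn.mul hμc).const_mul (2 * lam)
  obtain ⟨F, hF₀, hF⟩ := exists_hasDerivAt_of_continuousOn_Icc zero_le_one hcont
  have hF_C1 : IsC1On01 F fun x ↦ 2 * lam * (u x * μ x) := ⟨hF, hcont⟩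
  have hF₁ : F 1 = 0 := by
    have hFTC := hF_C1.integral_deriv
    rwa [h.integral_mul_weight_eq_zero, hF₀, sub_zero, eq_comm] at hFTC
  have hflux := h.flux_add_primitive_eq_zero hσc hμc hF_C1 hF₀ hF₁
  refine ⟨fun x ↦ -F x, fun x hx ↦ ?_, fun x hx ↦ ?_, by rw [hF₀, neg_zero],
    by rw [hF₁, neg_zero]⟩
  · have hne : σ x ^ 2 * μ x ≠ 0 := mul_ne_zero (pow_ne_zero 2 (hσ x hx)) (hμ x hx)
    rw [← eq_neg_of_add_eq_zero_left (hflux hx), mul_comm (u' x), inv_mul_cancel_left₀ hne]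
    exact h.1.1 x hx
  · exact (hF x hx).neg.congr_deriv (by ring)

theorem exists_eqOn_const_mul (h : WeakEigenpair σ μ lam u u') {v v' : ℝ → ℝ}
    (hv : WeakEigenpair σ μ lam v v')
    (hσc : ContinuousOn σ (Icc 0 1)) (hμc : ContinuousOn μ (Icc 0 1))
    (hσ : ∀ x ∈ Icc (0 : ℝ) 1, σ x ≠ 0) (hμ : ∀ x ∈ Icc (0 : ℝ) 1, μ x ≠ 0) :
    ∃ c, EqOn v (fun x ↦ c * u x) (Icc 0 1) := by
  obtain ⟨q, hq⟩ := h.exists_isNeumannSolution hσc hμc hσ hμ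
  obtain ⟨p, hp⟩ := hv.exists_isNeumannSolution hσc hμc hσ hμ
  exact hq.exists_eqOn_const_mul hp (hμc.const_mul 2)
    (continuousOn_inv_sq_mul hσc hμc hσ hμ) h.2.1

theorem exists_holderOnWith_deriv (h : WeakEigenpair σ μ lam u u')
    (hσc : ContinuousOn σ (Icc 0 1)) (hμc : ContinuousOn μ (Icc 0 1))
    (hσ : ∀ x ∈ Icc (0 : ℝ) 1, σ x ≠ 0) (hμ : ∀ x ∈ Icc (0 : ℝ) 1, μ x ≠ 0)
    {β : ℝ≥0} (hβ : β ≤ 1)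
    (hσH : ∃ C, HolderOnWith C β σ (Icc 0 1)) (hμH : ∃ C, HolderOnWith C β μ (Icc 0 1)) :
    ∃ C, HolderOnWith C β u' (Icc 0 1) := by
  obtain ⟨q, hq⟩ := h.exists_isNeumannSolution hσc hμc hσ hμ
  obtain ⟨K, hqK⟩ := exists_lipschitzOnWith_of_hasDerivWithinAt (convex_Icc 0 1) isCompact_Icc
    (fun x hx ↦ (hq.hasDerivAt_flux x hx).hasDerivWithinAt)
    (((hμc.const_mul 2).const_mul lam).mul hq.continuousOn).neg
  obtain ⟨Cσ, hCσ⟩ := hσH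
  obtain ⟨Cμ, hCμ⟩ := hμH
  obtain ⟨Cq, hCq⟩ := exists_holderOnWith_of_le (Metric.isBounded_Icc 0 1) hβ
    ⟨K, holderOnWith_one.2 hqK⟩
  obtain ⟨C, hC⟩ := exists_holderOnWith_comp_of_contDiffAt
    (g := fun p : ℝ × ℝ × ℝ ↦ (p.1 ^ 2 * p.2.1)⁻¹ * p.2.2) isCompact_Icc
    (hσc.prodMk (hμc.prodMk hq.continuousOn_flux))
    (holderOnWith_prodMk hCσ (holderOnWith_prodMk hCμ hCq)) fun x hx ↦
      ((by fun_prop : ContDiffAt ℝ 1 (fun p : ℝ × ℝ × ℝ ↦ p.1 ^ 2 * p.2.1) _).inv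
        (mul_ne_zero (pow_ne_zero 2 (hσ x hx)) (hμ x hx))).mul (by fun_prop)
  refine ⟨C, fun x hx y hy ↦ ?_⟩
  rw [(h.1.1 x hx).unique (hq.hasDerivAt x hx), (h.1.1 y hy).unique (hq.hasDerivAt y hy)]
  exact hC x hx y hy

end WeakEigenpair

theorem statement0_general
    (hσc : ContinuousOn σ (Icc 0 1)) (hμc : ContinuousOn μ (Icc 0 1))
    (hσ : ∀ x ∈ Icc (0 : ℝ) 1, σ x ≠ 0) (hμ : ∀ x ∈ Icc (0 : ℝ) 1, 0 < μ x) :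
    ∃ (lam : ℕ → ℝ) (w w' : ℕ → ℝ → ℝ),
      lam 0 = 0 ∧ EqOn (w 0) 1 (Icc 0 1) ∧ StrictMono lam ∧
      (∀ i, WeakEigenpair σ μ (lam i) (w i) (w' i)) ∧
      (∀ i k, i ≠ k → ∫ x in (0 : ℝ)..1, w i x * w k x * μ x = 0) ∧
      (∀ i, w' i 0 = 0 ∧ w' i 1 = 0) ∧
      (∀ x ∈ Ioo (0 : ℝ) 1, 0 < w' 1 x) ∧ StrictMonoOn (w 1) (Icc 0 1) ∧
      (∀ β : ℝ≥0, β ≤ 1 → (∃ C, HolderOnWith C β σ (Icc 0 1)) →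
        (∃ C, HolderOnWith C β μ (Icc 0 1)) → ∀ i, ∃ C, HolderOnWith C β (w' i) (Icc 0 1)) ∧
      ∀ i (u u' : ℝ → ℝ), WeakEigenpair σ μ (lam i) u u' →
        ∃ c, EqOn u (fun x ↦ c * w i x) (Icc 0 1) := by
  have hμ_ne : ∀ x ∈ Icc (0 : ℝ) 1, μ x ≠ 0 := fun x hx ↦ (hμ x hx).ne'
  have hac : ContinuousOn (fun x ↦ 2 * μ x) (Icc 0 1) := hμc.const_mul 2
  have hsc := continuousOn_inv_sq_mul hσc hμc hσ hμ_ne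
  have hs : ∀ x ∈ Icc (0 : ℝ) 1, 0 < (σ x ^ 2 * μ x)⁻¹ := fun x hx ↦
    inv_pos.2 (mul_pos (sq_pos_of_ne_zero (hσ x hx)) (hμ x hx))
  obtain ⟨lam, w, q, hlam₀, hlam, hsol, hw₀, hq₁⟩ := exists_isNeumannSolution_seq hac hsc
    (fun x hx ↦ mul_pos two_pos (hμ x hx)) hs
  have hw i : WeakEigenpair σ μ (lam i) (w i) fun x ↦ (σ x ^ 2 * μ x)⁻¹ * q i x :=
    (hsol i).weakEigenpair hσc hμc hσ hμ_ne ⟨0, left_mem_Icc.2 zero_le_one, by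
      rw [hw₀]; exact pow_ne_zero i (neg_ne_zero.2 one_ne_zero)⟩
  have hpos : ∀ x ∈ Ioo (0 : ℝ) 1, 0 < (σ x ^ 2 * μ x)⁻¹ * q 1 x := fun x hx ↦
    mul_pos (hs x (Ioo_subset_Icc_self hx)) (hq₁ x hx)
  refine ⟨lam, w, _, hlam₀, ?_, hlam, hw,
    fun i k hik ↦ (hw i).integral_mul_eq_zero (hw k) (hlam.injective.ne hik),
    fun i ↦ ⟨by rw [(hsol i).flux_zero, mul_zero], by rw [(hsol i).flux_one, mul_zero]⟩,
    hpos, (hw 1).1.strictMonoOn hpos,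
    fun β hβ hσH hμH i ↦ (hw i).exists_holderOnWith_deriv hσc hμc hσ hμ_ne hβ hσH hμH,
    fun i u u' hu ↦ (hw i).exists_eqOn_const_mul hu hσc hμc hσ hμ_ne⟩
  exact (hlam₀ ▸ hsol 0).eqOn (isNeumannSolution_one _ _) hac hsc (hw₀ 0)

end WeakProblem

/-- Spectral decomposition for the weak Neumann eigenvalue problem associated with a
`1/2`-Hölder volatility `σ` and an `α`-Hölder density `μ`, both bounded below by `d > 0`. -/
theorem statement0
    (α d : ℝ) (hα : 0 < α) (hα1 : α ≤ 1) (hd : 0 < d)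
    (σ μ : ℝ → ℝ)
    (hσc : ContinuousOn σ (Set.Icc (0:ℝ) 1)) (hμc : ContinuousOn μ (Set.Icc (0:ℝ) 1))
    (hσd : ∀ x ∈ Set.Icc (0:ℝ) 1, d ≤ σ x) (hμd : ∀ x ∈ Set.Icc (0:ℝ) 1, d ≤ μ x)
    (hμ1 : (∫ x in (0:ℝ)..1, μ x) = 1)
    (hσH : ∃ C : ℝ, ∀ x ∈ Set.Icc (0:ℝ) 1, ∀ y ∈ Set.Icc (0:ℝ) 1,
      |σ x - σ y| ≤ C * |x - y| ^ ((1:ℝ)/2))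
    (hμH : ∃ C : ℝ, ∀ x ∈ Set.Icc (0:ℝ) 1, ∀ y ∈ Set.Icc (0:ℝ) 1,
      |μ x - μ y| ≤ C * |x - y| ^ α) :
    ∃ (lam : ℕ → ℝ) (w w' : ℕ → ℝ → ℝ),
      -- λ₀ = 0 and w₀ ≡ 1
      lam 0 = 0 ∧ (∀ x ∈ Set.Icc (0:ℝ) 1, w 0 x = 1) ∧
      -- 0 < λ₁ < λ₂ ≤ λ₃ ≤ ...
      0 < lam 1 ∧ lam 1 < lam 2 ∧ (∀ i : ℕ, 2 ≤ i → lam i ≤ lam (i+1)) ∧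
      -- each (λᵢ, wᵢ) solves the weak Neumann eigenvalue problem
      (∀ i : ℕ, WeakEigenpair σ μ (lam i) (w i) (w' i)) ∧
      -- μ-orthogonality
      (∀ i k : ℕ, i ≠ k → (∫ x in (0:ℝ)..1, w i x * w k x * μ x) = 0) ∧
      -- Neumann boundary conditions
      (∀ i : ℕ, w' i 0 = 0 ∧ w' i 1 = 0) ∧
      -- (after possibly replacing w₁ by -w₁) w₁' > 0 on (0,1), so w₁ is strictly monotone
      (∀ x ∈ Set.Ioo (0:ℝ) 1, 0 < w' 1 x) ∧ StrictMonoOn (w 1) (Set.Icc (0:ℝ) 1) ∧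
      -- w₁' is Hölder continuous of order min(1/2, α)
      (∃ C : ℝ, ∀ x ∈ Set.Icc (0:ℝ) 1, ∀ y ∈ Set.Icc (0:ℝ) 1,
        |w' 1 x - w' 1 y| ≤ C * |x - y| ^ (min ((1:ℝ)/2) α)) ∧
      -- λ₁ is simple
      (∀ (u u' : ℝ → ℝ), WeakEigenpair σ μ (lam 1) u u' →
        ∃ cc : ℝ, ∀ x ∈ Set.Icc (0:ℝ) 1, u x = cc * w 1 x) := by
  have hpos {f : ℝ → ℝ} (hf : ∀ x ∈ Icc (0 : ℝ) 1, d ≤ f x) x (hx : x ∈ Icc (0 : ℝ) 1) :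
      0 < f x := hd.trans_le (hf x hx)
  obtain ⟨lam, w, w', hlam₀, hw₀, hlam, hw, horth, hneumann, hw₁', hw₁, hholder, hsimple⟩ :=
    statement0_general hσc hμc (fun x hx ↦ (hpos hσd x hx).ne') (hpos hμd)
  refine ⟨lam, w, w', hlam₀, hw₀, hlam₀ ▸ hlam zero_lt_one, hlam one_lt_two,
    fun i _ ↦ hlam.monotone i.le_succ, hw, horth, hneumann, hw₁', hw₁, ?_, hsimple 1⟩
  have hβ : 0 ≤ min (1 / 2) α := le_min one_half_pos.le hα.le
  have hβ₁ : min (1 / 2) α ≤ 1 := (min_le_left _ _).trans one_half_lt_one.le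
  rw [← exists_holderOnWith_toNNReal_iff hβ]
  rw [← exists_holderOnWith_toNNReal_iff one_half_pos.le] at hσH
  rw [← exists_holderOnWith_toNNReal_iff hα.le] at hμH
  exact hholder _ (Real.toNNReal_le_one.2 hβ₁)
    (exists_holderOnWith_of_le (Metric.isBounded_Icc 0 1)
      (Real.toNNReal_le_toNNReal (min_le_left _ _)) hσH)
    (exists_holderOnWith_of_le (Metric.isBounded_Icc 0 1)
      (Real.toNNReal_le_toNNReal (min_le_right _ _)) hμH) 1
end

section
/- For every x ∈ [0,1] one has σ²(x) u'(x) μ(x) = 2ζ ∫₀ˣ u(y) μ(y) dy; consequently, at every point x ∈ [0,1] where u'(x) ≠ 0, the squared volatility admits the spectral representation σ²(x) = 2ζ (∫₀ˣ u(y) μ(y) dy) / (u'(x) μ(x)). -/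
open MeasureTheory Set

theorem integral_eq_sub_of_hasDerivWithinAt_Icc {E : Type*} [NormedAddCommGroup E]
    [NormedSpace ℝ E] [CompleteSpace E] {F f : ℝ → E} {a b : ℝ} (hab : a ≤ b)
    (hF : ∀ x ∈ Icc a b, HasDerivWithinAt F (f x) (Icc a b) x)
    (hf : IntervalIntegrable f volume a b) :
    ∫ y in a..b, f y = F b - F a :=
  intervalIntegral.integral_eq_sub_of_hasDerivAt_of_le hab
    (fun x hx => (hF x hx).continuousWithinAt)
    (fun x hx => (hF x (Ioo_subset_Icc_self hx)).hasDerivAt (Icc_mem_nhds hx.1 hx.2)) hf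

theorem sub_eq_const_mul_integral_mul_of_hasDerivWithinAt {F u w : ℝ → ℝ} {a b c x : ℝ}
    (hu : ContinuousOn u (Icc a b)) (hw : IntervalIntegrable w volume a b)
    (hF : ∀ y ∈ Icc a b, HasDerivWithinAt F (c * (u y * w y)) (Icc a b) y)
    (hx : x ∈ Icc a b) :
    F x - F a = c * ∫ y in a..x, u y * w y := by
  have hsub : Icc a x ⊆ Icc a b := Icc_subset_Icc_right hx.2
  have hw_x : IntervalIntegrable w volume a x :=
    hw.mono_set (by simpa only [uIcc_of_le hx.1, uIcc_of_le (hx.1.trans hx.2)] using hsub)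
  have huw : IntervalIntegrable (fun y => u y * w y) volume a x :=
    hw_x.continuousOn_mul (by simpa only [uIcc_of_le hx.1] using hu.mono hsub)
  rw [← intervalIntegral.integral_const_mul]
  exact (integral_eq_sub_of_hasDerivWithinAt_Icc hx.1
    (fun y hy => (hF y (hsub hy)).mono hsub) (huw.const_mul c)).symm

theorem statement4_general {σ μ u u' : ℝ → ℝ} {a b ζ : ℝ}
    (hμ : IntervalIntegrable μ volume a b) (hμ0 : ∀ x ∈ Icc a b, μ x ≠ 0)
    (hu : ∀ x ∈ Icc a b, HasDerivWithinAt u (u' x) (Icc a b) x)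
    (heig : ∀ x ∈ Icc a b,
      HasDerivWithinAt (fun y => σ y ^ 2 * μ y * u' y) (2 * ζ * (u x * μ x)) (Icc a b) x)
    (hu'a : u' a = 0) :
    (∀ x ∈ Icc a b, σ x ^ 2 * u' x * μ x = 2 * ζ * ∫ y in a..x, u y * μ y) ∧
    (∀ x ∈ Icc a b, u' x ≠ 0 →
      σ x ^ 2 = 2 * ζ * (∫ y in a..x, u y * μ y) / (u' x * μ x)) := by
  have flux_eq : ∀ x ∈ Icc a b,
      σ x ^ 2 * u' x * μ x = 2 * ζ * ∫ y in a..x, u y * μ y := fun x hx => calc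
    σ x ^ 2 * u' x * μ x = σ x ^ 2 * μ x * u' x - σ a ^ 2 * μ a * u' a := by
      rw [hu'a]; ring
    _ = 2 * ζ * ∫ y in a..x, u y * μ y :=
      sub_eq_const_mul_integral_mul_of_hasDerivWithinAt
        (fun y hy => (hu y hy).continuousWithinAt) hμ heig hx
  refine ⟨flux_eq, fun x hx hu'x => ?_⟩
  rw [eq_div_iff (mul_ne_zero hu'x (hμ0 x hx)), ← mul_assoc, flux_eq x hx]

/-- If `u` is an eigenfunction of the generator `Lf = (σ² μ f')'/(2μ)` with eigenvalue `ζ`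
and `u'(0) = 0`, then `σ²(x) u'(x) μ(x) = 2ζ ∫₀ˣ u μ` for every `x ∈ [0,1]`; consequently,
wherever `u'(x) ≠ 0`, `σ²(x) = 2ζ (∫₀ˣ u μ)/(u'(x) μ(x))`. -/
theorem statement4 (σ μ u u' G' : ℝ → ℝ) (ζ : ℝ)
    (hσc : ContinuousOn σ (Set.Icc (0:ℝ) 1)) (hμc : ContinuousOn μ (Set.Icc (0:ℝ) 1))
    (hσpos : ∀ x ∈ Set.Icc (0:ℝ) 1, 0 < σ x) (hμpos : ∀ x ∈ Set.Icc (0:ℝ) 1, 0 < μ x)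
    (hu : ∀ x ∈ Set.Icc (0:ℝ) 1, HasDerivAt u (u' x) x)
    (hu' : ContinuousOn u' (Set.Icc (0:ℝ) 1))
    (hG : ∀ x ∈ Set.Icc (0:ℝ) 1,
      HasDerivAt (fun y => (σ y)^2 * μ y * u' y) (G' x) x)
    (hG' : ContinuousOn G' (Set.Icc (0:ℝ) 1))
    (heig : ∀ x ∈ Set.Icc (0:ℝ) 1, G' x = 2 * ζ * u x * μ x)
    (hu'0 : u' 0 = 0) :
    (∀ x ∈ Set.Icc (0:ℝ) 1,
      (σ x)^2 * u' x * μ x = 2 * ζ * ∫ y in (0:ℝ)..x, u y * μ y) ∧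
    (∀ x ∈ Set.Icc (0:ℝ) 1, u' x ≠ 0 →
      (σ x)^2 = 2 * ζ * (∫ y in (0:ℝ)..x, u y * μ y) / (u' x * μ x)) :=
  statement4_general (hμc.intervalIntegrable_of_Icc zero_le_one) (fun x hx => (hμpos x hx).ne')
    (fun x hx => (hu x hx).hasDerivWithinAt)
    (fun x hx => ((hG x hx).congr_deriv (by rw [heig x hx, mul_assoc])).hasDerivWithinAt) hu'0
end

section
/- Then ∫₀¹ u(x) v(x) dμ(x) = ∫₀¹ ∫₀¹ u'(y) v'(z) · μ([0, min(y,z))) · μ([max(y,z), 1]) dy dz. -/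
open MeasureTheory

/-!
This is Hoeffding's covariance identity. By the fundamental theorem of calculus, `u` agrees up to
a constant with the superposition `∫ u'(y) 1_{[y, ∞)} dy` of step functions, and likewise for `v`.
Covariance ignores constants and is bilinear, so by Fubini `cov(u, v)` is the integral of
`u'(y) v'(z) cov(1_{[y, ∞)}, 1_{[z, ∞)})`. As the half-lines are nested, the latter covariance
is `μ(-∞, min(y, z)) μ[max(y, z), ∞)`.
-/

open Set ProbabilityTheory

lemma norm_setIntegral_le_integral_norm {α E : Type*} [MeasurableSpace α] [NormedAddCommGroup E]
    [NormedSpace ℝ E] {μ : Measure α} {f : α → E} (hf : Integrable f μ) (s : Set α) :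
    ‖∫ x in s, f x ∂μ‖ ≤ ∫ x, ‖f x‖ ∂μ :=
  (norm_integral_le_integral_norm _).trans
    (setIntegral_le_integral hf.norm (.of_forall fun _ ↦ norm_nonneg _))

section Preorder

variable {α : Type*} [Preorder α] [MeasurableSpace α] {μ : Measure α} {a b : α}

lemma measureReal_Ico_eq_Iio_of_ae_le (h : ∀ᵐ x ∂μ, a ≤ x) (c : α) :
    μ.real (Ico a c) = μ.real (Iio c) :=
  measureReal_congr (h.mono fun _ hx ↦ propext (and_iff_right hx))

lemma measureReal_Icc_eq_Ici_of_ae_le (h : ∀ᵐ x ∂μ, x ≤ b) (c : α) :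
    μ.real (Icc c b) = μ.real (Ici c) :=
  measureReal_congr (h.mono fun _ hx ↦ propext (and_iff_left hx))

end Preorder

section Covariance

variable {Ω : Type*} [MeasurableSpace Ω] {μ : Measure Ω}

lemma covariance_congr {X X' Y Y' : Ω → ℝ} (hX : X =ᵐ[μ] X') (hY : Y =ᵐ[μ] Y') :
    cov[X, Y; μ] = cov[X', Y'; μ] := by
  rw [covariance, integral_congr_ae hX, integral_congr_ae hY]
  refine integral_congr_ae ?_
  filter_upwards [hX, hY] with ω hXω hYω
  rw [hXω, hYω]

variable [IsProbabilityMeasure μ]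

lemma covariance_eq_integral_mul_sub {X Y : Ω → ℝ} (hX : Integrable X μ) (hY : Integrable Y μ)
    (hXY : Integrable (fun ω ↦ X ω * Y ω) μ) :
    cov[X, Y; μ] = ∫ ω, X ω * (Y ω - μ[Y]) ∂μ := by
  have hYc : Integrable (fun ω ↦ Y ω - μ[Y]) μ := hY.sub (integrable_const _)
  have hXYc : Integrable (fun ω ↦ X ω * (Y ω - μ[Y])) μ := by
    simp_rw [mul_sub]
    exact hXY.sub (hX.mul_const _)
  have hYc_mean : ∫ ω, (Y ω - μ[Y]) ∂μ = 0 := by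
    simp [integral_sub hY (integrable_const _)]
  simp_rw [covariance, sub_mul]
  rw [integral_sub hXYc (hYc.const_mul _), integral_const_mul, hYc_mean, mul_zero, sub_zero]

lemma covariance_integral_left {α : Type*} [MeasurableSpace α] {ν : Measure α} [SFinite ν]
    {F : α → Ω → ℝ} {Y : Ω → ℝ} (hF : Integrable (fun p : α × Ω ↦ F p.1 p.2) (ν.prod μ))
    (hY : Integrable Y μ) (hFY : Integrable (fun p : α × Ω ↦ F p.1 p.2 * Y p.2) (ν.prod μ)) :
    cov[fun ω ↦ ∫ y, F y ω ∂ν, Y; μ] = ∫ y, cov[F y, Y; μ] ∂ν := by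
  have hFYc : Integrable (fun p : α × Ω ↦ F p.1 p.2 * (Y p.2 - μ[Y])) (ν.prod μ) := by
    simp_rw [mul_sub]
    exact hFY.sub (hF.mul_const _)
  have hXY : Integrable (fun ω ↦ (∫ y, F y ω ∂ν) * Y ω) μ := by
    simpa only [integral_mul_const] using hFY.integral_prod_right
  calc cov[fun ω ↦ ∫ y, F y ω ∂ν, Y; μ]
      = ∫ ω, ∫ y, F y ω * (Y ω - μ[Y]) ∂ν ∂μ := by
        rw [covariance_eq_integral_mul_sub hF.integral_prod_right hY hXY]
        simp_rw [integral_mul_const]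
    _ = ∫ y, ∫ ω, F y ω * (Y ω - μ[Y]) ∂μ ∂ν := (integral_integral_swap hFYc).symm
    _ = ∫ y, cov[F y, Y; μ] ∂ν := by
        refine integral_congr_ae ?_
        filter_upwards [hF.prod_right_ae, hFY.prod_right_ae] with y hFy hFYy
        exact (covariance_eq_integral_mul_sub hFy hY hFYy).symm

lemma covariance_indicator_const {s t : Set Ω} (hs : MeasurableSet s) (ht : MeasurableSet t)
    (c d : ℝ) :
    cov[s.indicator fun _ ↦ c, t.indicator fun _ ↦ d; μ] =
      c * d * (μ.real (s ∩ t) - μ.real s * μ.real t) := by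
  have h_mul : (s.indicator fun _ ↦ c) * (t.indicator fun _ ↦ d) =
      (s ∩ t).indicator fun _ ↦ c * d :=
    funext fun ω ↦ (inter_indicator_mul _ _ ω).symm
  rw [covariance_eq_sub (memLp_indicator_const 2 hs c (by simp))
    (memLp_indicator_const 2 ht d (by simp)), h_mul]
  simp only [integral_indicator_const, hs, ht, hs.inter ht, smul_eq_mul]
  ring

end Covariance

section LinearOrder

variable {α : Type*} [LinearOrder α] [TopologicalSpace α] [OrderClosedTopology α]
  [MeasurableSpace α] [OpensMeasurableSpace α]

lemma covariance_indicator_Ici (μ : Measure α) [IsProbabilityMeasure μ] (y z : α) (c d : ℝ) :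
    cov[(Ici y).indicator fun _ ↦ c, (Ici z).indicator fun _ ↦ d; μ] =
      c * d * μ.real (Iio (min y z)) * μ.real (Ici (max y z)) := by
  have h_prod : μ.real (Ici y) * μ.real (Ici z) =
      μ.real (Ici (min y z)) * μ.real (Ici (max y z)) := by
    rcases le_total y z with h | h
    · rw [min_eq_left h, max_eq_right h]
    · rw [min_eq_right h, max_eq_left h, mul_comm]
  rw [covariance_indicator_const measurableSet_Ici measurableSet_Ici, Ici_inter_Ici, h_prod,
    ← compl_Ici, probReal_compl_eq_one_sub measurableSet_Ici]
  ring

variable {E : Type*} [NormedAddCommGroup E]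

lemma integral_indicator_Ici_const [NormedSpace ℝ E] (ν : Measure α) (f : α → E) (x : α) :
    ∫ y, (Ici y).indicator (fun _ ↦ f y) x ∂ν = ∫ y in Iic x, f y ∂ν :=
  integral_indicator (f := f) measurableSet_Iic

variable [SecondCountableTopology α] {μ ν : Measure α}

lemma integrable_indicator_Ici_prod [IsFiniteMeasure μ] {f : α → E} (hf : Integrable f ν) :
    Integrable (fun p : α × α ↦ (Ici p.1).indicator (fun _ ↦ f p.1) p.2) (ν.prod μ) :=
  (hf.comp_fst μ).indicator (measurableSet_le measurable_fst measurable_snd)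

lemma integrable_setIntegral_Iic [NormedSpace ℝ E] [IsFiniteMeasure μ] [SFinite ν] {f : α → E}
    (hf : Integrable f ν) :
    Integrable (fun x ↦ ∫ y in Iic x, f y ∂ν) μ := by
  simpa only [integral_indicator_Ici_const] using
    (integrable_indicator_Ici_prod (μ := μ) hf).integral_prod_right

lemma covariance_setIntegral_Iic [IsProbabilityMeasure μ] [SFinite ν] {ρ : Measure α} [SFinite ρ]
    {f g : α → ℝ} (hf : Integrable f ν) (hg : Integrable g ρ) :
    cov[fun x ↦ ∫ y in Iic x, f y ∂ν, fun x ↦ ∫ z in Iic x, g z ∂ρ; μ] =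
      ∫ y, ∫ z, f y * g z * μ.real (Iio (min y z)) * μ.real (Ici (max y z)) ∂ρ ∂ν := by
  have hF := integrable_indicator_Ici_prod (μ := μ) hf
  have hG := integrable_indicator_Ici_prod (μ := μ) hg
  have hY : Integrable (fun x ↦ ∫ z in Iic x, g z ∂ρ) μ := integrable_setIntegral_Iic hg
  have hFY := hF.mul_bdd (hY.aestronglyMeasurable.comp_snd (μ := ν))
    (.of_forall fun p ↦ norm_setIntegral_le_integral_norm hg (Iic p.2))
  simp_rw [← integral_indicator_Ici_const ν f]
  rw [covariance_integral_left hF hY hFY]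
  congr with y
  have hstep : Integrable ((Ici y).indicator fun _ ↦ f y) μ :=
    (integrable_const (f y)).indicator measurableSet_Ici
  have hGstep := hG.mul_bdd (hstep.aestronglyMeasurable.comp_snd (μ := ρ))
    (.of_forall fun _ ↦ norm_indicator_le_norm_self _ _)
  simp_rw [← integral_indicator_Ici_const ρ g]
  rw [covariance_comm, covariance_integral_left hG hstep hGstep]
  congr with z
  rw [covariance_comm, covariance_indicator_Ici]

end LinearOrder

lemma eq_add_setIntegral_Iic_of_hasDerivAt {a b x : ℝ} {u u' : ℝ → ℝ}
    (hu : ContinuousOn u (Icc a b)) (hu' : ∀ t ∈ Ioo a b, HasDerivAt u (u' t) t)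
    (hint : IntegrableOn u' (Ioc a b)) (hx : x ∈ Icc a b) :
    u x = u a + ∫ y in Iic x, u' y ∂(volume.restrict (Ioc a b)) := by
  have hint_x : IntervalIntegrable u' volume a x :=
    (intervalIntegrable_iff_integrableOn_Ioc_of_le hx.1).2
      (hint.mono_set (Ioc_subset_Ioc_right hx.2))
  rw [Measure.restrict_restrict measurableSet_Iic, inter_comm, Ioc_inter_Iic, min_eq_right hx.2,
    ← intervalIntegral.integral_of_le hx.1,
    intervalIntegral.integral_eq_sub_of_hasDerivAt_of_le hx.1
      (hu.mono (Icc_subset_Icc_right hx.2)) (fun t ht ↦ hu' t ⟨ht.1, ht.2.trans_le hx.2⟩) hint_x,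
    add_sub_cancel]

theorem statement5_general {μ : Measure ℝ} [IsProbabilityMeasure μ] {a b : ℝ}
    (hμ : ∀ᵐ x ∂μ, x ∈ Icc a b) {u u' v v' : ℝ → ℝ}
    (hu : ContinuousOn u (Icc a b)) (hu' : ∀ x ∈ Ioo a b, HasDerivAt u (u' x) x)
    (hu'_int : IntegrableOn u' (Ioc a b))
    (hv : ContinuousOn v (Icc a b)) (hv' : ∀ x ∈ Ioo a b, HasDerivAt v (v' x) x)
    (hv'_int : IntegrableOn v' (Ioc a b)) :
    cov[u, v; μ] = ∫ y in a..b, ∫ z in a..b,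
      u' y * v' z * μ.real (Ico a (min y z)) * μ.real (Icc (max y z) b) := by
  obtain ⟨x₀, hx₀⟩ := hμ.exists
  have hab : a ≤ b := hx₀.1.trans hx₀.2
  have hu_eq := hμ.mono fun x ↦ eq_add_setIntegral_Iic_of_hasDerivAt hu hu' hu'_int
  have hv_eq := hμ.mono fun x ↦ eq_add_setIntegral_Iic_of_hasDerivAt hv hv' hv'_int
  rw [covariance_congr hu_eq hv_eq,
    covariance_const_add_left (integrable_setIntegral_Iic hu'_int),
    covariance_const_add_right (integrable_setIntegral_Iic hv'_int),
    covariance_setIntegral_Iic hu'_int hv'_int]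
  simp_rw [intervalIntegral.integral_of_le hab,
    measureReal_Ico_eq_Iio_of_ae_le (hμ.mono fun _ hx ↦ hx.1),
    measureReal_Icc_eq_Ici_of_ae_le (hμ.mono fun _ hx ↦ hx.2)]

/-- For a Borel probability measure `μ` on `[0,1]` and `C¹` functions `u, v` with
`∫ u dμ = ∫ v dμ = 0`:
`∫ u v dμ = ∫₀¹∫₀¹ u'(y) v'(z) μ([0,min(y,z))) μ([max(y,z),1]) dy dz`. -/
theorem statement5 (μ : Measure ℝ) [IsProbabilityMeasure μ]
    (hsupp : μ (Set.Icc (0:ℝ) 1)ᶜ = 0)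
    (u u' v v' : ℝ → ℝ)
    (hu : ∀ x ∈ Set.Icc (0:ℝ) 1, HasDerivAt u (u' x) x)
    (hu' : ContinuousOn u' (Set.Icc (0:ℝ) 1))
    (hv : ∀ x ∈ Set.Icc (0:ℝ) 1, HasDerivAt v (v' x) x)
    (hv' : ContinuousOn v' (Set.Icc (0:ℝ) 1))
    (hu0 : ∫ x, u x ∂μ = 0) (hv0 : ∫ x, v x ∂μ = 0) :
    ∫ x, u x * v x ∂μ
      = ∫ y in (0:ℝ)..1, ∫ z in (0:ℝ)..1,
          u' y * v' z * (μ (Set.Ico 0 (min y z))).toReal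
            * (μ (Set.Icc (max y z) 1)).toReal := by
  simpa only [covariance, Measure.real, hu0, hv0, sub_zero] using statement5_general hsupp
    (HasDerivAt.continuousOn hu) (fun x hx ↦ hu x (Ioo_subset_Icc_self hx))
    (hu'.integrableOn_Icc.mono_set Ioc_subset_Icc_self)
    (HasDerivAt.continuousOn hv) (fun x hx ↦ hv x (Ioo_subset_Icc_self hx))
    (hv'.integrableOn_Icc.mono_set Ioc_subset_Icc_self)
end

section
/- If moreover 0 < μ([0,x]) < 1 for every x ∈ (0,1), and u'(x) > 0 and v'(x) > 0 for all x ∈ (0,1), then ∫₀¹ u(x) v(x) dμ(x) > 0. -/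
open MeasureTheory

/-!
The covariance of `X` and `Y` is half the integral of `(X x - X y) * (Y x - Y y)` over two
independent samples `x`, `y`. If `X` and `Y` are both strictly increasing, this integrand is
positive off the diagonal, so the covariance can vanish only if two independent samples agree almost
surely, that is, only if `μ` is concentrated at a point. For centred functions the covariance is the
integral of the product.
-/

open ProbabilityTheory

lemma exists_ae_eq_of_ae_prod_eq {α : Type*} [MeasurableSpace α] {μ : Measure α} [SFinite μ]
    [NeZero μ] (h : ∀ᵐ p ∂μ.prod μ, p.1 = p.2) : ∃ c, ∀ᵐ x ∂μ, x = c := by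
  obtain ⟨c, hc⟩ := (Measure.ae_ae_of_ae_prod h).exists
  exact ⟨c, hc.mono fun _ ↦ Eq.symm⟩

lemma not_ae_eq_of_measure_pos_of_measure_lt_one {α : Type*} [MeasurableSpace α] {μ : Measure α}
    [IsProbabilityMeasure μ] {s : Set α} (hpos : 0 < μ s) (hlt : μ s < 1) (c : α) :
    ¬ ∀ᵐ x ∂μ, x = c := by
  intro hc
  by_cases hcs : c ∈ s
  · have hs : s =ᵐ[μ] Set.univ := Filter.eventuallyEq_univ.2 (hc.mono fun x hx ↦ hx ▸ hcs)
    exact hlt.ne ((measure_congr hs).trans measure_univ)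
  · exact hpos.ne' (measure_eq_zero_iff_ae_notMem.2 (hc.mono fun x hx ↦ hx ▸ hcs))

section Covariance

variable {Ω : Type*} [MeasurableSpace Ω] {μ : Measure Ω} [IsProbabilityMeasure μ] {X Y : Ω → ℝ}

lemma integrable_prod_sub_mul_sub (hX : MemLp X 2 μ) (hY : MemLp Y 2 μ) :
    Integrable (fun p : Ω × Ω ↦ (X p.1 - X p.2) * (Y p.1 - Y p.2)) (μ.prod μ) :=
  ((hX.comp_fst μ).sub (hX.comp_snd μ)).integrable_mul ((hY.comp_fst μ).sub (hY.comp_snd μ))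

lemma integral_prod_sub_mul_sub (hX : MemLp X 2 μ) (hY : MemLp Y 2 μ) :
    ∫ p, (X p.1 - X p.2) * (Y p.1 - Y p.2) ∂μ.prod μ = 2 * cov[X, Y; μ] := by
  have hXi : Integrable X μ := hX.integrable one_le_two
  have hYi : Integrable Y μ := hY.integrable one_le_two
  have hXY : Integrable (fun x ↦ X x * Y x) μ := hX.integrable_mul hY
  have integral_snd (x : Ω) : ∫ y, (X x - X y) * (Y x - Y y) ∂μ
      = X x * Y x - X x * μ[Y] - μ[X] * Y x + ∫ y, X y * Y y ∂μ := by
    calc ∫ y, (X x - X y) * (Y x - Y y) ∂μ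
        = ∫ y, X x * Y x - X x * Y y - X y * Y x + X y * Y y ∂μ := by
          congr with y; ring
      _ = X x * Y x - X x * μ[Y] - μ[X] * Y x + ∫ y, X y * Y y ∂μ := by
          rw [integral_add (by fun_prop) hXY, integral_sub (by fun_prop) (by fun_prop),
            integral_sub (by fun_prop) (by fun_prop)]
          simp only [integral_const, probReal_univ, one_smul, integral_const_mul,
            integral_mul_const]
  rw [integral_prod _ (integrable_prod_sub_mul_sub hX hY)]
  simp only [integral_snd]
  rw [integral_add (by fun_prop) (by fun_prop), integral_sub (by fun_prop) (by fun_prop),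
    integral_sub hXY (by fun_prop), covariance_eq_sub hX hY]
  simp only [integral_const, probReal_univ, one_smul, integral_const_mul, integral_mul_const,
    Pi.mul_apply]
  ring

theorem covariance_pos_of_ae_prod_sub_mul_sub_pos (hX : MemLp X 2 μ) (hY : MemLp Y 2 μ)
    (hpos : ∀ᵐ p ∂μ.prod μ, p.1 ≠ p.2 → 0 < (X p.1 - X p.2) * (Y p.1 - Y p.2))
    (hμ : ∀ c, ¬ ∀ᵐ x ∂μ, x = c) : 0 < cov[X, Y; μ] := by
  have hnonneg : 0 ≤ᵐ[μ.prod μ] fun p ↦ (X p.1 - X p.2) * (Y p.1 - Y p.2) := by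
    filter_upwards [hpos] with p hp
    rcases eq_or_ne p.1 p.2 with heq | hne
    · simp [heq]
    · exact (hp hne).le
  suffices hne : ∫ p, (X p.1 - X p.2) * (Y p.1 - Y p.2) ∂μ.prod μ ≠ 0 by
    have hlt := (integral_nonneg_of_ae hnonneg).lt_of_ne' hne
    rw [integral_prod_sub_mul_sub hX hY] at hlt
    exact pos_of_mul_pos_right hlt zero_le_two
  intro hzero
  rw [integral_eq_zero_iff_of_nonneg_ae hnonneg (integrable_prod_sub_mul_sub hX hY)] at hzero
  have hdiag : ∀ᵐ p ∂μ.prod μ, p.1 = p.2 := by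
    filter_upwards [hpos, hzero] with p hp hp0
    by_contra hne
    exact (hp hne).ne' hp0
  obtain ⟨c, hc⟩ := exists_ae_eq_of_ae_prod_eq hdiag
  exact hμ c hc

end Covariance

lemma sub_mul_sub_pos_of_strictMonoOn {α R : Type*} [LinearOrder α] [Ring R] [LinearOrder R]
    [IsStrictOrderedRing R] {f g : α → R} {s : Set α} (hf : StrictMonoOn f s)
    (hg : StrictMonoOn g s) {x y : α} (hx : x ∈ s) (hy : y ∈ s) (hxy : x ≠ y) :
    0 < (f x - f y) * (g x - g y) := by
  rcases hxy.lt_or_gt with hlt | hgt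
  · exact mul_pos_of_neg_of_neg (sub_neg.2 (hf hx hy hlt)) (sub_neg.2 (hg hx hy hlt))
  · exact mul_pos (sub_pos.2 (hf hy hx hgt)) (sub_pos.2 (hg hy hx hgt))

theorem covariance_pos_of_strictMonoOn {α : Type*} [LinearOrder α] [MeasurableSpace α]
    {μ : Measure α} [IsProbabilityMeasure μ] {s : Set α} (hμs : ∀ᵐ x ∂μ, x ∈ s) {u v : α → ℝ}
    (hu : StrictMonoOn u s) (hv : StrictMonoOn v s) (hu2 : MemLp u 2 μ) (hv2 : MemLp v 2 μ)
    (hμ : ∀ c, ¬ ∀ᵐ x ∂μ, x = c) : 0 < cov[u, v; μ] := by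
  refine covariance_pos_of_ae_prod_sub_mul_sub_pos hu2 hv2 ?_ hμ
  filter_upwards [Measure.quasiMeasurePreserving_fst.ae hμs,
    Measure.quasiMeasurePreserving_snd.ae hμs] with p hfst hsnd
  exact sub_mul_sub_pos_of_strictMonoOn hu hv hfst hsnd

lemma strictMonoOn_Icc_of_hasDerivAt_pos {f f' : ℝ → ℝ} {a b : ℝ}
    (hf : ∀ x ∈ Set.Icc a b, HasDerivAt f (f' x) x) (hf' : ∀ x ∈ Set.Ioo a b, 0 < f' x) :
    StrictMonoOn f (Set.Icc a b) :=
  strictMonoOn_of_hasDerivWithinAt_pos (convex_Icc a b) (HasDerivAt.continuousOn hf)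
    (fun x hx ↦ (hf x (interior_subset hx)).hasDerivWithinAt) (by rwa [interior_Icc])

theorem statement6_general {α : Type*} [ConditionallyCompleteLinearOrder α] [TopologicalSpace α]
    [OrderTopology α] [MeasurableSpace α] [BorelSpace α] {μ : Measure α} [IsProbabilityMeasure μ]
    {K : Set α} (hK : IsCompact K) (hμK : ∀ᵐ x ∂μ, x ∈ K) {u v : α → ℝ}
    (hu : StrictMonoOn u K) (hv : StrictMonoOn v K) (hμ : ∀ c, ¬ ∀ᵐ x ∂μ, x = c) :
    0 < cov[u, v; μ] := by
  have memLp_two {f : α → ℝ} (hf : StrictMonoOn f K) : MemLp f 2 μ := by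
    simpa only [Measure.restrict_eq_self_of_ae_mem hμK] using
      hf.monotoneOn.memLp_isCompact (μ := μ) hK
  exact covariance_pos_of_strictMonoOn hμK hu hv (memLp_two hu) (memLp_two hv) hμ

/-- For a Borel probability measure `μ` on `[0,1]` with `0 < μ([0,x]) < 1` for `x ∈ (0,1)`,
and `C¹` functions `u, v` with `∫ u dμ = ∫ v dμ = 0` and `u' > 0`, `v' > 0` on `(0,1)`,
one has `∫ u v dμ > 0`. -/
theorem statement6 (μ : Measure ℝ) [IsProbabilityMeasure μ]
    (hsupp : μ (Set.Icc (0:ℝ) 1)ᶜ = 0)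
    (u u' v v' : ℝ → ℝ)
    (hu : ∀ x ∈ Set.Icc (0:ℝ) 1, HasDerivAt u (u' x) x)
    (hu' : ContinuousOn u' (Set.Icc (0:ℝ) 1))
    (hv : ∀ x ∈ Set.Icc (0:ℝ) 1, HasDerivAt v (v' x) x)
    (hv' : ContinuousOn v' (Set.Icc (0:ℝ) 1))
    (hu0 : ∫ x, u x ∂μ = 0) (hv0 : ∫ x, v x ∂μ = 0)
    (hμpos : ∀ x ∈ Set.Ioo (0:ℝ) 1, 0 < μ (Set.Icc 0 x) ∧ μ (Set.Icc 0 x) < 1)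
    (hupos : ∀ x ∈ Set.Ioo (0:ℝ) 1, 0 < u' x)
    (hvpos : ∀ x ∈ Set.Ioo (0:ℝ) 1, 0 < v' x) :
    0 < ∫ x, u x * v x ∂μ := by
  obtain ⟨hpos, hlt⟩ := hμpos (1 / 2) (by norm_num)
  simpa only [covariance, hu0, hv0, sub_zero] using
    statement6_general isCompact_Icc hsupp (strictMonoOn_Icc_of_hasDerivAt_pos hu hupos)
      (strictMonoOn_Icc_of_hasDerivAt_pos hv hvpos)
      (not_ae_eq_of_measure_pos_of_measure_lt_one hpos hlt)
end

section
/- Then (d²/(2D)) · ( ∫₀¹ u(x)² μ(x) dx + ∫₀¹ u'(x)² μ(x) dx ) ≤ ∫₀¹ u'(x)² σ²(x) μ(x) dx ≤ D · ( ∫₀¹ u(x)² μ(x) dx + ∫₀¹ u'(x)² μ(x) dx ). -/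
/-!
Subtracting a constant `c` from `u` can only increase `∫ u² μ` when `u` has `μ`-mean zero, so
`∫ u² μ ≤ ∫ (u - u(a))² μ`. Writing `u(x) - u(a)` as the integral of `u'`, the Cauchy–Schwarz
inequality bounds the right-hand side by `D (b - a)² ∫ u'²`, and `μ ≥ d` turns this into the
weighted Poincaré inequality `∫ u² μ ≤ (D / d) (b - a)² ∫ u'² μ`. The bounds on `σ²` compare
`∫ u'² σ² μ` with `∫ u'² μ`.
-/

open MeasureTheory Set

section Measure

variable {α : Type*} [MeasurableSpace α] {ν : Measure α} {f w : α → ℝ} {c C : ℝ}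

theorem integrable_mul_of_ae_mem_Icc (hf : Integrable f ν) (hw : AEStronglyMeasurable w ν)
    (hwb : ∀ᵐ x ∂ν, w x ∈ Icc c C) : Integrable (fun x ↦ f x * w x) ν :=
  hf.mul_bdd hw (hwb.mono fun _ hx ↦ abs_le_max_abs_abs hx.1 hx.2)

theorem integral_mul_mem_Icc_of_ae_mem_Icc (hf : Integrable f ν) (hf₀ : 0 ≤ᵐ[ν] f)
    (hw : AEStronglyMeasurable w ν) (hwb : ∀ᵐ x ∂ν, w x ∈ Icc c C) :
    ∫ x, f x * w x ∂ν ∈ Icc (c * ∫ x, f x ∂ν) (C * ∫ x, f x ∂ν) := by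
  have hfw : Integrable (fun x ↦ f x * w x) ν := integrable_mul_of_ae_mem_Icc hf hw hwb
  simp only [mul_comm _ (∫ x, f x ∂ν), ← integral_mul_const]
  constructor
  · refine integral_mono_ae (hf.mul_const c) hfw ?_
    filter_upwards [hf₀, hwb] with x hfx hwx using mul_le_mul_of_nonneg_left hwx.1 hfx
  · refine integral_mono_ae hfw (hf.mul_const C) ?_
    filter_upwards [hf₀, hwb] with x hfx hwx using mul_le_mul_of_nonneg_left hwx.2 hfx

theorem integral_sq_mul_le_integral_sub_sq_mul_of_integral_mul_eq_zero
    (hw : Integrable w ν) (hw₀ : 0 ≤ᵐ[ν] w)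
    (hfw : Integrable (fun x ↦ f x * w x) ν) (hf2w : Integrable (fun x ↦ f x ^ 2 * w x) ν)
    (hmean : ∫ x, f x * w x ∂ν = 0) (c : ℝ) :
    ∫ x, f x ^ 2 * w x ∂ν ≤ ∫ x, (f x - c) ^ 2 * w x ∂ν := by
  have hsub : Integrable (fun x ↦ f x ^ 2 * w x - 2 * c * (f x * w x)) ν :=
    hf2w.sub (hfw.const_mul _)
  calc ∫ x, f x ^ 2 * w x ∂ν
      ≤ (∫ x, f x ^ 2 * w x ∂ν) - 2 * c * (∫ x, f x * w x ∂ν) + c ^ 2 * ∫ x, w x ∂ν := by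
        rw [hmean, mul_zero, sub_zero]
        exact le_add_of_nonneg_right (mul_nonneg (sq_nonneg c) (integral_nonneg_of_ae hw₀))
    _ = ∫ x, (f x ^ 2 * w x - 2 * c * (f x * w x) + c ^ 2 * w x) ∂ν := by
        rw [integral_add hsub (hw.const_mul _), integral_sub hf2w (hfw.const_mul _),
          integral_const_mul, integral_const_mul]
    _ = ∫ x, (f x - c) ^ 2 * w x ∂ν := by
        congr with x
        ring

theorem sq_integral_le_measureReal_univ_mul_integral_sq [IsFiniteMeasure ν] (hf : MemLp f 2 ν) :
    (∫ x, f x ∂ν) ^ 2 ≤ ν.real univ * ∫ x, f x ^ 2 ∂ν := by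
  rcases eq_or_ne ν 0 with rfl | hν
  · simp
  have : NeZero ν := ⟨hν⟩
  have jensen : (⨍ x, f x ∂ν) ^ 2 ≤ ⨍ x, f x ^ 2 ∂ν :=
    even_two.convexOn_pow.map_average_le (continuousOn_pow 2) isClosed_univ (by simp)
      (hf.integrable one_le_two) hf.integrable_sq
  calc (∫ x, f x ∂ν) ^ 2 = ν.real univ ^ 2 * (⨍ x, f x ∂ν) ^ 2 := by
        rw [← measure_smul_average, smul_eq_mul, mul_pow]
    _ ≤ ν.real univ ^ 2 * ⨍ x, f x ^ 2 ∂ν := by gcongr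
    _ = ν.real univ * ∫ x, f x ^ 2 ∂ν := by
        rw [← measure_smul_average ν (fun x ↦ f x ^ 2), smul_eq_mul]
        ring

end Measure

/-- `u` belongs to the Sobolev space `H¹(a, b)` with weak derivative `u'`: in dimension one this
means that `u'` is square integrable and `u` is a primitive of `u'`. -/
structure HasSqIntegrableDerivOn (u u' : ℝ → ℝ) (a b : ℝ) : Prop where
  memLp : MemLp u' 2 (volume.restrict (Ioc a b))
  integral_eq_sub : ∀ x ∈ Icc a b, ∫ y in a..x, u' y = u x - u a

theorem hasSqIntegrableDerivOn_of_hasDerivAt {u u' : ℝ → ℝ} {a b : ℝ}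
    (hderiv : ∀ x ∈ Icc a b, HasDerivAt u (u' x) x) (hcont : ContinuousOn u' (Icc a b)) :
    HasSqIntegrableDerivOn u u' a b where
  memLp := by
    rw [memLp_two_iff_integrable_sq
      ((hcont.mono Ioc_subset_Icc_self).aestronglyMeasurable measurableSet_Ioc)]
    exact (hcont.pow 2).integrableOn_Icc.mono_set Ioc_subset_Icc_self
  integral_eq_sub x hx := by
    have hsub : uIcc a x ⊆ Icc a b := uIcc_of_le hx.1 ▸ Icc_subset_Icc_right hx.2
    exact intervalIntegral.integral_eq_sub_of_hasDerivAt (fun y hy ↦ hderiv y (hsub hy))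
      (hcont.mono hsub).intervalIntegrable

namespace HasSqIntegrableDerivOn

variable {u u' : ℝ → ℝ} {a b : ℝ}

theorem continuousOn (hu : HasSqIntegrableDerivOn u u' a b) : ContinuousOn u (Icc a b) := by
  have hint : IntegrableOn u' (Icc a b) :=
    (integrableOn_Icc_iff_integrableOn_Ioc (by simp)).2 (hu.memLp.integrable one_le_two)
  refine ((intervalIntegral.continuousOn_primitive hint).const_add (u a)).congr fun x hx ↦ ?_
  simp [← intervalIntegral.integral_of_le hx.1, hu.integral_eq_sub x hx]

theorem integrableOn_comp (hu : HasSqIntegrableDerivOn u u' a b) {g : ℝ → ℝ} (hg : Continuous g) :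
    IntegrableOn (fun x ↦ g (u x)) (Ioc a b) :=
  (hg.comp_continuousOn hu.continuousOn).integrableOn_Icc.mono_set Ioc_subset_Icc_self

theorem sub_sq_le (hu : HasSqIntegrableDerivOn u u' a b) {x : ℝ} (hx : x ∈ Icc a b) :
    (u x - u a) ^ 2 ≤ (b - a) * ∫ y in Ioc a b, u' y ^ 2 := by
  have hsub : Ioc a x ⊆ Ioc a b := Ioc_subset_Ioc_right hx.2
  calc (u x - u a) ^ 2 = (∫ y in Ioc a x, u' y) ^ 2 := by
        rw [← hu.integral_eq_sub x hx, intervalIntegral.integral_of_le hx.1]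
    _ ≤ (x - a) * ∫ y in Ioc a x, u' y ^ 2 := by
        simpa [hx.1] using sq_integral_le_measureReal_univ_mul_integral_sq
          (hu.memLp.mono_measure (Measure.restrict_mono_set volume hsub))
    _ ≤ (b - a) * ∫ y in Ioc a b, u' y ^ 2 :=
        mul_le_mul (sub_le_sub_right hx.2 a)
          (setIntegral_mono_set hu.memLp.integrable_sq (ae_of_all _ fun y ↦ sq_nonneg (u' y))
            hsub.eventuallyLE)
          (integral_nonneg fun y ↦ sq_nonneg (u' y)) (sub_nonneg.2 (hx.1.trans hx.2))

theorem integral_sub_sq_le (hu : HasSqIntegrableDerivOn u u' a b) (hab : a ≤ b) :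
    ∫ x in Ioc a b, (u x - u a) ^ 2 ≤ (b - a) ^ 2 * ∫ x in Ioc a b, u' x ^ 2 := by
  calc ∫ x in Ioc a b, (u x - u a) ^ 2
      ≤ ∫ _x in Ioc a b, (b - a) * ∫ y in Ioc a b, u' y ^ 2 :=
        setIntegral_mono_on (hu.integrableOn_comp (g := fun t ↦ (t - u a) ^ 2) (by fun_prop))
          (integrableOn_const measure_Ioc_lt_top.ne) measurableSet_Ioc
          fun x hx ↦ hu.sub_sq_le (Ioc_subset_Icc_self hx)
    _ = (b - a) ^ 2 * ∫ x in Ioc a b, u' x ^ 2 := by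
        rw [setIntegral_const, Real.volume_real_Ioc_of_le hab, smul_eq_mul]
        ring

theorem weighted_poincare (hu : HasSqIntegrableDerivOn u u' a b) (hab : a ≤ b) {μ : ℝ → ℝ}
    {d D : ℝ} (hd : 0 < d) (hdD : d ≤ D)
    (hμm : AEStronglyMeasurable μ (volume.restrict (Ioc a b)))
    (hμ : ∀ᵐ x ∂volume.restrict (Ioc a b), μ x ∈ Icc d D)
    (hmean : ∫ x in Ioc a b, u x * μ x = 0) :
    ∫ x in Ioc a b, u x ^ 2 * μ x ≤ D / d * (b - a) ^ 2 * ∫ x in Ioc a b, u' x ^ 2 * μ x := by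
  have hD : 0 ≤ D := hd.le.trans hdD
  have integrable_mul_weight {g : ℝ → ℝ} (hg : Continuous g) :
      IntegrableOn (fun x ↦ g (u x) * μ x) (Ioc a b) :=
    integrable_mul_of_ae_mem_Icc (hu.integrableOn_comp hg) hμm hμ
  have hμint : IntegrableOn μ (Ioc a b) := by
    simpa using integrable_mul_weight (g := fun _ ↦ 1) continuous_const
  calc ∫ x in Ioc a b, u x ^ 2 * μ x
      ≤ ∫ x in Ioc a b, (u x - u a) ^ 2 * μ x :=
        integral_sq_mul_le_integral_sub_sq_mul_of_integral_mul_eq_zero hμint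
          (hμ.mono fun x hx ↦ hd.le.trans hx.1)
          (integrable_mul_weight continuous_id) (integrable_mul_weight (continuous_pow 2))
          hmean (u a)
    _ ≤ D * ∫ x in Ioc a b, (u x - u a) ^ 2 :=
        (integral_mul_mem_Icc_of_ae_mem_Icc
          (hu.integrableOn_comp (g := fun t ↦ (t - u a) ^ 2) (by fun_prop))
          (ae_of_all _ fun x ↦ sq_nonneg (u x - u a)) hμm hμ).2
    _ ≤ D * ((b - a) ^ 2 * ∫ x in Ioc a b, u' x ^ 2) := by gcongr; exact hu.integral_sub_sq_le hab
    _ = D / d * (b - a) ^ 2 * (d * ∫ x in Ioc a b, u' x ^ 2) := by field_simp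
    _ ≤ D / d * (b - a) ^ 2 * ∫ x in Ioc a b, u' x ^ 2 * μ x := by
        gcongr
        exact (integral_mul_mem_Icc_of_ae_mem_Icc hu.memLp.integrable_sq
          (ae_of_all _ fun x ↦ sq_nonneg (u' x)) hμm hμ).1

end HasSqIntegrableDerivOn

theorem statement8_general {a b d D : ℝ} (hab : a ≤ b) (hd : 0 < d) (hdD : d ≤ D) {σ μ : ℝ → ℝ}
    (hσm : AEStronglyMeasurable σ (volume.restrict (Ioc a b)))
    (hμm : AEStronglyMeasurable μ (volume.restrict (Ioc a b)))
    (hσ : ∀ᵐ x ∂volume.restrict (Ioc a b), σ x ^ 2 ∈ Icc d D)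
    (hμ : ∀ᵐ x ∂volume.restrict (Ioc a b), μ x ∈ Icc d D)
    {u u' : ℝ → ℝ} (hu : HasSqIntegrableDerivOn u u' a b)
    (hmean : ∫ x in a..b, u x * μ x = 0) :
    d ^ 2 / ((1 + (b - a) ^ 2) * D) *
          ((∫ x in a..b, u x ^ 2 * μ x) + ∫ x in a..b, u' x ^ 2 * μ x)
        ≤ ∫ x in a..b, u' x ^ 2 * σ x ^ 2 * μ x ∧
      (∫ x in a..b, u' x ^ 2 * σ x ^ 2 * μ x)
        ≤ D * ((∫ x in a..b, u x ^ 2 * μ x) + ∫ x in a..b, u' x ^ 2 * μ x) := by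
  have hD : 0 < D := hd.trans_le hdD
  have sq_mul_nonneg (g : ℝ → ℝ) : 0 ≤ᵐ[volume.restrict (Ioc a b)] fun x ↦ g x ^ 2 * μ x :=
    hμ.mono fun x hx ↦ mul_nonneg (sq_nonneg (g x)) (hd.le.trans hx.1)
  simp only [intervalIntegral.integral_of_le hab, mul_right_comm _ (σ _ ^ 2)] at hmean ⊢
  have poincare := hu.weighted_poincare hab hd hdD hμm hμ hmean
  obtain ⟨energy_ge, energy_le⟩ := integral_mul_mem_Icc_of_ae_mem_Icc
    (integrable_mul_of_ae_mem_Icc hu.memLp.integrable_sq hμm hμ) (sq_mul_nonneg u') (hσm.pow 2) hσ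
  have hA : 0 ≤ ∫ x in Ioc a b, u x ^ 2 * μ x := integral_nonneg_of_ae (sq_mul_nonneg u)
  have hB : 0 ≤ ∫ x in Ioc a b, u' x ^ 2 * μ x := integral_nonneg_of_ae (sq_mul_nonneg u')
  set A := ∫ x in Ioc a b, u x ^ 2 * μ x
  set B := ∫ x in Ioc a b, u' x ^ 2 * μ x
  refine ⟨le_trans ?_ energy_ge, energy_le.trans (by gcongr; exact le_add_of_nonneg_left hA)⟩
  calc d ^ 2 / ((1 + (b - a) ^ 2) * D) * (A + B)
      ≤ d ^ 2 / ((1 + (b - a) ^ 2) * D) * (D / d * (b - a) ^ 2 * B + D / d * B) := by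
        gcongr
        exact le_mul_of_one_le_left hB ((one_le_div hd).2 hdD)
    _ = d * B := by field_simp; ring

/-- Coercivity bounds: if `d ≤ σ² ≤ D`, `d ≤ μ ≤ D` on `[0,1]` and `u` is `C¹` with
`∫₀¹ u μ = 0`, then
`(d²/(2D)) (∫ u² μ + ∫ u'² μ) ≤ ∫ u'² σ² μ ≤ D (∫ u² μ + ∫ u'² μ)`. -/
theorem statement8 (d D : ℝ) (hd : 0 < d) (hdD : d < D)
    (σ μ : ℝ → ℝ) (hσm : Measurable σ) (hμm : Measurable μ)
    (hσ : ∀ x ∈ Set.Icc (0:ℝ) 1, d ≤ (σ x)^2 ∧ (σ x)^2 ≤ D)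
    (hμ : ∀ x ∈ Set.Icc (0:ℝ) 1, d ≤ μ x ∧ μ x ≤ D)
    (u u' : ℝ → ℝ)
    (hderiv : ∀ x ∈ Set.Icc (0:ℝ) 1, HasDerivAt u (u' x) x)
    (hcont : ContinuousOn u' (Set.Icc (0:ℝ) 1))
    (hmean : (∫ x in (0:ℝ)..1, u x * μ x) = 0) :
    (d^2/(2*D)) * ((∫ x in (0:ℝ)..1, (u x)^2 * μ x) + ∫ x in (0:ℝ)..1, (u' x)^2 * μ x)
        ≤ ∫ x in (0:ℝ)..1, (u' x)^2 * (σ x)^2 * μ x ∧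
      (∫ x in (0:ℝ)..1, (u' x)^2 * (σ x)^2 * μ x)
        ≤ D * ((∫ x in (0:ℝ)..1, (u x)^2 * μ x) + ∫ x in (0:ℝ)..1, (u' x)^2 * μ x) := by
  have onIoc {p : ℝ → Prop} (hp : ∀ x ∈ Icc (0 : ℝ) 1, p x) :
      ∀ᵐ x ∂volume.restrict (Ioc (0 : ℝ) 1), p x :=
    ae_restrict_of_forall_mem measurableSet_Ioc fun x hx ↦ hp x (Ioc_subset_Icc_self hx)
  have bounds := statement8_general zero_le_one hd hdD.le hσm.aestronglyMeasurable
    hμm.aestronglyMeasurable (onIoc hσ) (onIoc hμ)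
    (hasSqIntegrableDerivOn_of_hasDerivAt hderiv hcont) hmean
  rwa [show (1 + (1 - 0) ^ 2 : ℝ) = 2 by norm_num] at bounds
end
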